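/- arXiv:1408.0529 — 3 statements merged into one kernel-verified Lean document; each statement's English description precedes it below -/
import Mathlib

section
/- Let k ≥ 2 and let A = {a, s₁, …, s_k, z} consist of k+2 distinct letters. Let π be the pair on A with π₀(a) = 1, π₀(s_i) = i+1 for 1 ≤ i ≤ k, π₀(z) = k+2, and π₁(z) = 1, π₁(s_i) = i+1 for 1 ≤ i ≤ k, π₁(a) = k+2. Then π is irreducible and every permutation ν of A with ν(a) = a and ν(z) = z belongs to G(π). -/
open Equiv

/-- A (labeled) pair on alphabet `A`: two bijections from `A` to positions.
Positions are `Fin (Fintype.card A)`, 0-indexed: position `j : Fin N`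
corresponds to the position `j+1 ∈ {1,…,N}` of the paper. -/
abbrev RPair (A : Type*) [Fintype A] := Bool → (A ≃ Fin (Fintype.card A))

variable {A : Type*} [Fintype A]

/-- Irreducibility: `π₁(π₀⁻¹({1,…,k})) = {1,…,k}` only for `k = N`. -/
def PairIrreducible (π : RPair A) : Prop :=
  ∀ k : Fin (Fintype.card A),
    (∀ x : A, π false x ≤ k → π true x ≤ k) → (k : ℕ) + 1 = Fintype.card A

/-- Type-ε right Rauzy induction sends `π` to `π'`.  Here `zc = π_ε⁻¹(N)` and
`zo = π_{1-ε}⁻¹(N)` are characterized as the letters of maximal position. -/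
def RightMove (π π' : RPair A) : Prop :=
  ∃ ε : Bool, ∃ zc zo : A,
    (∀ x : A, π ε x ≤ π ε zc) ∧
    (∀ x : A, π (!ε) x ≤ π (!ε) zo) ∧
    π' ε = π ε ∧
    (∀ b : A, π (!ε) b ≤ π (!ε) zc → π' (!ε) b = π (!ε) b) ∧
    ((π' (!ε) zo : ℕ) = (π (!ε) zc : ℕ) + 1) ∧
    (∀ b : A, ¬ π (!ε) b ≤ π (!ε) zc → b ≠ zo → (π' (!ε) b : ℕ) = (π (!ε) b : ℕ) + 1)

/-- Type-ε left Rauzy induction sends `π` to `π'`.  Here `ac = π_ε⁻¹(1)` and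
`ao = π_{1-ε}⁻¹(1)` are characterized as the letters of minimal position. -/
def LeftMove (π π' : RPair A) : Prop :=
  ∃ ε : Bool, ∃ ac ao : A,
    (∀ x : A, π ε ac ≤ π ε x) ∧
    (∀ x : A, π (!ε) ao ≤ π (!ε) x) ∧
    π' ε = π ε ∧
    (∀ b : A, π (!ε) ac ≤ π (!ε) b → π' (!ε) b = π (!ε) b) ∧
    ((π' (!ε) ao : ℕ) = (π (!ε) ac : ℕ) - 1) ∧
    (∀ b : A, ¬ π (!ε) ac ≤ π (!ε) b → b ≠ ao → (π' (!ε) b : ℕ) = (π (!ε) b : ℕ) - 1)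

/-- The Rauzy class `R(π)`: pairs reachable by right Rauzy inductions. -/
def RClass (π : RPair A) : Set (RPair A) := {ρ | Relation.ReflTransGen RightMove π ρ}

/-- The extended Rauzy class `E(π)`: pairs reachable by left and right Rauzy inductions. -/
def EClass (π : RPair A) : Set (RPair A) :=
  {ρ | Relation.ReflTransGen (fun x y => RightMove x y ∨ LeftMove x y) π ρ}

/-- `π ∘ ν = (π₀ ∘ ν, π₁ ∘ ν)`. -/
def pairRename (π : RPair A) (ν : Equiv.Perm A) : RPair A := fun ε => ν.trans (π ε)

/-- The renaming set `G(π) = {ν : π ∘ ν ∈ E(π)}`. -/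
def renamings (π : RPair A) : Set (Equiv.Perm A) := {ν | pairRename π ν ∈ EClass π}

/-- The non-labeled permutation `π₁ ∘ π₀⁻¹`. -/
def nonlabeled (π : RPair A) : Equiv.Perm (Fin (Fintype.card A)) :=
  (π false).symm.trans (π true)

/-- The position `1` (smallest). -/
def posFirst (A : Type*) [Fintype A] [Nonempty A] : Fin (Fintype.card A) :=
  ⟨0, Fintype.card_pos⟩

/-- The position `N` (largest). -/
def posLast (A : Type*) [Fintype A] [Nonempty A] : Fin (Fintype.card A) :=
  ⟨Fintype.card A - 1, Nat.sub_lt Fintype.card_pos Nat.one_pos⟩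

/-- A pair is standard if `π₀(π₁⁻¹(1)) = π₁(π₀⁻¹(1)) = N`. -/
def PairStandard [Nonempty A] (π : RPair A) : Prop :=
  π false ((π true).symm (posFirst A)) = posLast A ∧
  π true ((π false).symm (posFirst A)) = posLast A

/-- `S` is the permutation `S(π)` of the paper. -/
def IsS [Nonempty A] (π : RPair A) (S : Equiv.Perm A) : Prop :=
  ∀ b : A,
    (π true b = posFirst A → S b = (π false).symm (posFirst A)) ∧
    (π true b ≠ posFirst A →
      (((π true b : ℕ) = (π true ((π false).symm (posLast A)) : ℕ) + 1 →
        (π false (S b) : ℕ) = (π false ((π true).symm (posLast A)) : ℕ) + 1) ∧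
      ((π true b : ℕ) ≠ (π true ((π false).symm (posLast A)) : ℕ) + 1 →
        (π false (S b) : ℕ) =
          (π false ((π true).symm
            ⟨(π true b : ℕ) - 1,
              Nat.lt_of_le_of_lt (Nat.sub_le _ _) (π true b).isLt⟩) : ℕ) + 1)))

/-- The marked letter `X(π) = π₀⁻¹(1)`. -/
def XOf [Nonempty A] (π : RPair A) : A := (π false).symm (posFirst A)

/-- `Q` is the permutation `Q(π)` of the paper (constructed from `S = S(π)`). -/
def IsQ [Nonempty A] (π : RPair A) (S Q : Equiv.Perm A) : Prop :=
  Q (XOf π) = XOf π ∧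
  ∀ b : A, b ≠ XOf π →
    (S b = XOf π → Q b = S (S b)) ∧ (S b ≠ XOf π → Q b = S b)

/-- `Λ`: the multiset of cardinalities of the orbits of `Q` on `A ∖ {X}`
(for `Q` fixing `X`): the nontrivial cycle lengths of `Q` together with one `1`
for each fixed point of `Q` other than `X`. -/
def lamOf [DecidableEq A] (Q : Equiv.Perm A) : Multiset ℕ :=
  Q.cycleType + Multiset.replicate ((Finset.univ.filter fun a => Q a = a).card - 1) 1

/-- The centralizer `Z(π)` of `(X(π), Q(π))`. -/
def ZOf [Nonempty A] (π : RPair A) (Q : Equiv.Perm A) : Set (Equiv.Perm A) :=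
  {ν | ν (XOf π) = XOf π ∧ ν⁻¹ * Q * ν = Q}

/-!
A pair is encoded by its two rows, the words listing the letters in the order of `π₀` and `π₁`.
If a row ends in `c`, iterating the right induction that keeps it rotates the part of the other row
after `c`. Starting from `a X z / z X a` with `X = P x Q` and `P` nonempty, four such rotations
bring `x` to the front of `X`:

  `a P x Q z / z P x Q a`  →  `a P x Q z / z x Q a P`  →  `a P Q z x / z x Q a P`
  →  `a P Q z x / z x P Q a`  →  `a x P Q z / z x P Q a`.

Moves to the front generate all permutations of `X`, so right inductions alone suffice.
-/

section MoveToFront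

variable {α : Type*} {r : List α → List α → Prop}

lemma exists_perm_rel_append_of_moveToFront (refl : ∀ l, r l l)
    (trans : ∀ {l₁ l₂ l₃}, r l₁ l₂ → r l₂ l₃ → r l₁ l₃)
    (moveToFront : ∀ P x Q, r (P ++ x :: Q) (x :: (P ++ Q))) {X Y : List α} (T : List α)
    (h : X.Perm (T ++ Y)) : ∃ Y', Y'.Perm Y ∧ r X (T ++ Y') := by
  induction T generalizing Y with
  | nil => exact ⟨X, h, refl X⟩
  | cons t T ih =>
    obtain ⟨Y', hY', hX⟩ := ih (h.trans List.perm_middle.symm)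
    obtain ⟨P, Q, rfl⟩ := List.append_of_mem (hY'.symm.mem_iff.mp List.mem_cons_self)
    refine ⟨P ++ Q, (List.perm_middle.symm.trans hY').cons_inv, trans hX ?_⟩
    simpa using moveToFront (T ++ P) t Q

lemma rel_of_perm_of_moveToFront (refl : ∀ l, r l l)
    (trans : ∀ {l₁ l₂ l₃}, r l₁ l₂ → r l₂ l₃ → r l₁ l₃)
    (moveToFront : ∀ P x Q, r (P ++ x :: Q) (x :: (P ++ Q))) {X Y : List α} (h : X.Perm Y) :
    r X Y := by
  obtain ⟨Y', hY', hX⟩ :=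
    exists_perm_rel_append_of_moveToFront refl trans moveToFront Y (Y := []) (by simpa using h)
  simpa [hY'.eq_nil] using hX

end MoveToFront

/-- Right Rauzy induction on the two rows of a pair: the last letter `o` of one row is reinserted
right after the occurrence in that row of the last letter `c` of the other row. -/
inductive RauzyStep {α : Type*} : List α × List α → List α × List α → Prop
  | top (u p q : List α) (c o : α) :
      RauzyStep (u ++ [c], p ++ c :: (q ++ [o])) (u ++ [c], p ++ c :: o :: q)
  | bottom (u p q : List α) (c o : α) :
      RauzyStep (p ++ c :: (q ++ [o]), u ++ [c]) (p ++ c :: o :: q, u ++ [c])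

/-- Reachability by finitely many right Rauzy inductions on rows. -/
abbrev RauzyReach {α : Type*} : List α × List α → List α × List α → Prop :=
  Relation.ReflTransGen RauzyStep

/-- The rows `a X z / z X a` of a standard pair. -/
def standardRows {α : Type*} (a z : α) (X : List α) : List α × List α :=
  (a :: (X ++ [z]), z :: (X ++ [a]))

namespace RauzyReach

variable {α : Type*}

lemma swap {W W' : List α × List α} (h : RauzyReach W W') : RauzyReach W.swap W'.swap :=
  h.lift Prod.swap fun _ _ step => by
    cases step with
    | top u p q c o => exact .bottom u p q c o
    | bottom u p q c o => exact .top u p q c o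

lemma rotate_bottom (u p q r : List α) (c : α) :
    RauzyReach (u ++ [c], p ++ c :: (q ++ r)) (u ++ [c], p ++ c :: (r ++ q)) := by
  induction r using List.reverseRecOn generalizing q with
  | nil => simpa using Relation.ReflTransGen.refl
  | append_singleton r o ih =>
    have step := RauzyStep.top u p (q ++ r) c o
    simpa using Relation.ReflTransGen.head (by simpa using step) (ih (o :: q))

lemma rotate_top (u p q r : List α) (c : α) :
    RauzyReach (p ++ c :: (q ++ r), u ++ [c]) (p ++ c :: (r ++ q), u ++ [c]) :=
  (rotate_bottom u p q r c).swap

lemma standardRows_moveToFront (a z x : α) (P Q : List α) :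
    RauzyReach (standardRows a z (P ++ x :: Q)) (standardRows a z (x :: (P ++ Q))) := by
  rcases P.eq_nil_or_concat' with rfl | ⟨P, y, rfl⟩
  · exact Relation.ReflTransGen.refl
  have afterZ := rotate_bottom (a :: (P ++ y :: x :: Q)) [] (P ++ [y]) (x :: Q ++ [a]) z
  have afterY := rotate_top (z :: x :: (Q ++ a :: P)) (a :: P) [x] (Q ++ [z]) y
  have afterX := rotate_bottom (a :: (P ++ y :: (Q ++ [z]))) [z] (Q ++ [a]) (P ++ [y]) x
  have afterA := rotate_top (z :: x :: (P ++ y :: Q)) [] (P ++ y :: (Q ++ [z])) [x] a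
  simp only [standardRows, List.nil_append, List.cons_append, List.append_assoc]
    at afterZ afterY afterX afterA ⊢
  exact ((afterZ.trans afterY).trans afterX).trans afterA

lemma standardRows_of_perm (a z : α) {X Y : List α} (h : X.Perm Y) :
    RauzyReach (standardRows a z X) (standardRows a z Y) :=
  rel_of_perm_of_moveToFront (r := fun X Y => RauzyReach (standardRows a z X) (standardRows a z Y))
    (fun _ => Relation.ReflTransGen.refl) Relation.ReflTransGen.trans
    (fun P x Q => standardRows_moveToFront a z x P Q) h

end RauzyReach

/-- The row of a bijection to positions: the letters listed in the order of their positions. -/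
def row (e : A ≃ Fin (Fintype.card A)) : List A := List.ofFn e.symm

section Row

variable {e : A ≃ Fin (Fintype.card A)}

lemma length_row (e : A ≃ Fin (Fintype.card A)) : (row e).length = Fintype.card A :=
  List.length_ofFn

lemma nodup_row (e : A ≃ Fin (Fintype.card A)) : (row e).Nodup :=
  List.nodup_ofFn.mpr e.symm.injective

lemma mem_row (e : A ≃ Fin (Fintype.card A)) (x : A) : x ∈ row e :=
  List.mem_ofFn.mpr (e.symm.surjective x)

lemma row_injective : Function.Injective (row : (A ≃ Fin (Fintype.card A)) → List A) :=
  fun _ _ h => symm_bijective.injective (DFunLike.coe_injective (List.ofFn_injective h))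

lemma row_perm_row (e e' : A ≃ Fin (Fintype.card A)) : (row e).Perm (row e') :=
  (List.perm_ext_iff_of_nodup (nodup_row e) (nodup_row e')).mpr fun x =>
    iff_of_true (mem_row e x) (mem_row e' x)

lemma row_trans (ν : Perm A) (e : A ≃ Fin (Fintype.card A)) :
    row (ν.trans e) = (row e).map ν.symm := by
  rw [row, row, List.map_ofFn]
  rfl

lemma row_eq_of_forall_getElem {l : List A} (hlength : l.length = Fintype.card A)
    (hl : ∀ (i : ℕ) (hi : i < l.length), (e l[i] : ℕ) = i) : row e = l := by
  refine List.ext_getElem ((length_row e).trans hlength.symm) fun i _ hi => ?_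
  simpa [row, symm_apply_eq, Fin.ext_iff] using (hl i hi).symm

lemma idxOf_row [DecidableEq A] (e : A ≃ Fin (Fintype.card A)) (x : A) :
    (row e).idxOf x = e x := by
  have hx : (row e)[(e x : ℕ)]'(by simp [length_row]) = x := by simp [row]
  simpa only [hx] using (nodup_row e).idxOf_getElem (e x : ℕ) (by simp [length_row])

lemma exists_row_eq_of_perm {l : List A} (h : l.Perm (row e)) :
    ∃ e' : A ≃ Fin (Fintype.card A), row e' = l := by
  classical
  have hnodup : l.Nodup := h.nodup_iff.mpr (nodup_row e)
  have hlength : l.length = Fintype.card A := h.length_eq.trans (length_row e)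
  refine ⟨(hnodup.getEquivOfForallMemList l fun x => h.mem_iff.mpr (mem_row e x)).symm.trans
    (finCongr hlength), row_eq_of_forall_getElem hlength fun i hi => ?_⟩
  simp [hnodup.idxOf_getElem i hi]

lemma le_of_row_eq_append_singleton {u : List A} {c : A} (h : row e = u ++ [c]) (x : A) :
    e x ≤ e c := by
  classical
  have hc : c ∉ u := by
    have := h ▸ nodup_row e
    grind
  have hx : (u ++ [c]).idxOf x < (u ++ [c]).length := List.idxOf_lt_length_of_mem (h ▸ mem_row e x)
  rw [Fin.le_def, ← idxOf_row, ← idxOf_row, h, List.idxOf_append_of_notMem hc]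
  simpa [Nat.lt_succ_iff] using hx

lemma row_eq_cons_ofFn_append_singleton {k : ℕ} {a z : A} {s : Fin k → A}
    (hcard : Fintype.card A = k + 2) (ha : (e a : ℕ) = 0)
    (hs : ∀ i : Fin k, (e (s i) : ℕ) = (i : ℕ) + 1) (hz : (e z : ℕ) = k + 1) :
    row e = a :: (List.ofFn s ++ [z]) := by
  refine row_eq_of_forall_getElem (by simp [hcard]) fun i hi => ?_
  rcases i with _ | i
  · simpa using ha
  rcases (show i ≤ k by simpa using hi).lt_or_eq with hik | rfl
  · simpa [List.getElem_append, hik] using hs ⟨i, hik⟩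
  · simpa using hz

end Row

/-- The two rows of a pair, `π₀` on top. -/
def rows (π : RPair A) : List A × List A := (row (π false), row (π true))

lemma rows_injective : Function.Injective (rows : RPair A → List A × List A) := fun π π' h => by
  obtain ⟨htop, hbottom⟩ := Prod.ext_iff.mp h
  funext ε
  cases ε
  · exact row_injective htop
  · exact row_injective hbottom

lemma rows_pairRename (π : RPair A) (ν : Perm A) :
    rows (pairRename π ν) = (rows π).map (List.map ν.symm) (List.map ν.symm) :=
  Prod.ext (row_trans ν (π false)) (row_trans ν (π true))

lemma rightMove_of_row_eq {π π' : RPair A} {ε : Bool} {u p q : List A} {c o : A}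
    (hwinner : row (π ε) = u ++ [c]) (hloser : row (π (!ε)) = p ++ c :: (q ++ [o]))
    (hwinner' : π' ε = π ε) (hloser' : row (π' (!ε)) = p ++ c :: o :: q) : RightMove π π' := by
  classical
  have hnodup : (p ++ c :: (q ++ [o])).Nodup := hloser ▸ nodup_row _
  have hmem (b : A) : b ∈ p ++ c :: (q ++ [o]) := hloser ▸ mem_row _ b
  have hpos (b : A) : (π (!ε) b : ℕ) = (p ++ c :: (q ++ [o])).idxOf b := by
    rw [← hloser, idxOf_row]
  have hpos' (b : A) : (π' (!ε) b : ℕ) = (p ++ c :: o :: q).idxOf b := by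
    rw [← hloser', idxOf_row]
  refine ⟨ε, c, o, le_of_row_eq_append_singleton hwinner,
    le_of_row_eq_append_singleton (u := p ++ c :: q) (by simpa using hloser), hwinner', ?_, ?_, ?_⟩
  · intro b hb
    rw [Fin.le_def, hpos, hpos] at hb
    rw [Fin.ext_iff, hpos, hpos']
    grind
  · rw [hpos, hpos']
    grind
  · intro b hb hbo
    rw [Fin.le_def, hpos, hpos] at hb
    rw [hpos, hpos']
    grind

lemma exists_rightMove_of_row_eq {π : RPair A} {ε : Bool} {u p q : List A} {c o : A}
    (hwinner : row (π ε) = u ++ [c]) (hloser : row (π (!ε)) = p ++ c :: (q ++ [o])) :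
    ∃ π' : RPair A, π' ε = π ε ∧ row (π' (!ε)) = p ++ c :: o :: q ∧ RightMove π π' := by
  have hperm : (p ++ c :: o :: q).Perm (row (π (!ε))) :=
    hloser ▸ ((List.perm_append_singleton o q).symm.cons c).append_left p
  obtain ⟨e, he⟩ := exists_row_eq_of_perm hperm
  let π' : RPair A := Function.update π (!ε) e
  have hwinner' : π' ε = π ε := by simp [π']
  have hloser' : row (π' (!ε)) = p ++ c :: o :: q := by rwa [show π' (!ε) = e by simp [π']]
  exact ⟨π', hwinner', hloser', rightMove_of_row_eq hwinner hloser hwinner' hloser'⟩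

lemma RauzyStep.exists_rightMove {W W' : List A × List A} (h : RauzyStep W W') {π : RPair A}
    (hπ : rows π = W) : ∃ π', rows π' = W' ∧ RightMove π π' := by
  cases h with
  | top u p q c o =>
    obtain ⟨htop, hbottom⟩ := Prod.ext_iff.mp hπ
    obtain ⟨π', htop', hbottom', hmove⟩ := exists_rightMove_of_row_eq (ε := false) htop hbottom
    exact ⟨π', Prod.ext ((congrArg row htop').trans htop) hbottom', hmove⟩
  | bottom u p q c o =>
    obtain ⟨htop, hbottom⟩ := Prod.ext_iff.mp hπ
    obtain ⟨π', hbottom', htop', hmove⟩ := exists_rightMove_of_row_eq (ε := true) hbottom htop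
    exact ⟨π', Prod.ext htop' ((congrArg row hbottom').trans hbottom), hmove⟩

lemma RauzyReach.mem_RClass {π π' : RPair A} (h : RauzyReach (rows π) (rows π')) :
    π' ∈ RClass π := by
  suffices ∀ W, RauzyReach (rows π) W → ∃ ρ, rows ρ = W ∧ ρ ∈ RClass π by
    obtain ⟨ρ, hρ, hmem⟩ := this _ h
    exact rows_injective hρ ▸ hmem
  intro W hW
  induction hW with
  | refl => exact ⟨π, rfl, Relation.ReflTransGen.refl⟩
  | tail _ step ih =>
    obtain ⟨ρ, hρ, hmem⟩ := ih
    obtain ⟨ρ', hρ', hmove⟩ := step.exists_rightMove hρ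
    exact ⟨ρ', hρ', Relation.ReflTransGen.tail hmem hmove⟩

lemma RClass_subset_EClass (π : RPair A) : RClass π ⊆ EClass π :=
  fun _ h => Relation.ReflTransGen.mono (fun _ _ => Or.inl) _ _ h

lemma pairRename_mem_RClass_of_rows_eq_standardRows {π : RPair A} {a z : A} {X : List A}
    (hπ : rows π = standardRows a z X) {ν : Perm A} (ha : ν a = a) (hz : ν z = z) :
    pairRename π ν ∈ RClass π := by
  have hrename : rows (pairRename π ν) = standardRows a z (X.map ν.symm) := by
    have ha' : ν.symm a = a := ν.symm_apply_eq.mpr ha.symm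
    have hz' : ν.symm z = z := ν.symm_apply_eq.mpr hz.symm
    simp [rows_pairRename, hπ, standardRows, ha', hz']
  have hperm : X.Perm (X.map ν.symm) := by
    have htop : (a :: (X ++ [z])).Perm (a :: (X.map ν.symm ++ [z])) := by
      have hrow := row_perm_row (π false) (pairRename π ν false)
      rwa [show row (π false) = _ from congrArg Prod.fst hπ,
        show row (pairRename π ν false) = _ from congrArg Prod.fst hrename] at hrow
    exact (List.perm_append_right_iff [z]).mp htop.cons_inv
  apply RauzyReach.mem_RClass
  rw [hπ, hrename]
  exact .standardRows_of_perm a z hperm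

lemma pairIrreducible_of_first_eq_last {π : RPair A} {a : A} (hfirst : (π false a : ℕ) = 0)
    (hlast : (π true a : ℕ) + 1 = Fintype.card A) : PairIrreducible π := by
  intro j hj
  have haj : π true a ≤ j := hj a (by simp [Fin.le_def, hfirst])
  rw [Fin.le_def] at haj
  omega

theorem stmt9_general {A : Type*} [Fintype A] {k : ℕ} {a z : A} {s : Fin k → A}
    (hcard : Fintype.card A = k + 2) {π : RPair A}
    (h0a : (π false a : ℕ) = 0)
    (h0s : ∀ i : Fin k, (π false (s i) : ℕ) = (i : ℕ) + 1)
    (h0z : (π false z : ℕ) = k + 1)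
    (h1z : (π true z : ℕ) = 0)
    (h1s : ∀ i : Fin k, (π true (s i) : ℕ) = (i : ℕ) + 1)
    (h1a : (π true a : ℕ) = k + 1) :
    PairIrreducible π ∧ ∀ ν : Perm A, ν a = a → ν z = z → pairRename π ν ∈ RClass π := by
  have hrows : rows π = standardRows a z (List.ofFn s) :=
    Prod.ext (row_eq_cons_ofFn_append_singleton hcard h0a h0s h0z)
      (row_eq_cons_ofFn_append_singleton hcard h1z h1s h1a)
  exact ⟨pairIrreducible_of_first_eq_last h0a (by omega),
    fun _ ha hz => pairRename_mem_RClass_of_rows_eq_standardRows hrows ha hz⟩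

/-- for `A = {a, s₁, …, s_k, z}` (k+2 distinct letters) and the pair
`π₀ : a s₁ … s_k z`, `π₁ : z s₁ … s_k a` (positions written 0-indexed),
`π` is irreducible and every permutation fixing `a` and `z` is a renaming.
Here `s i` denotes `s_{i+1}`. -/
theorem stmt9 {A : Type*} [Fintype A] [DecidableEq A] [Nonempty A]
    (k : ℕ) (hk : 2 ≤ k) (a z : A) (s : Fin k → A)
    (hcard : Fintype.card A = k + 2)
    (π : RPair A)
    (h0a : (π false a : ℕ) = 0)
    (h0s : ∀ i : Fin k, (π false (s i) : ℕ) = (i : ℕ) + 1)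
    (h0z : (π false z : ℕ) = k + 1)
    (h1z : (π true z : ℕ) = 0)
    (h1s : ∀ i : Fin k, (π true (s i) : ℕ) = (i : ℕ) + 1)
    (h1a : (π true a : ℕ) = k + 1) :
    PairIrreducible π ∧
      ∀ ν : Equiv.Perm A, ν a = a → ν z = z → ν ∈ renamings π := by
  obtain ⟨hirr, hren⟩ := stmt9_general hcard h0a h0s h0z h1z h1s h1a
  exact ⟨hirr, fun ν ha hz => RClass_subset_EClass π (hren ν ha hz)⟩
end

section
/- Let N ≥ 2, A = {1,…,N}, and let π = (π₀, π₁) with π₀(n) = n and π₁(n) = N+1−n for all n ∈ A (equivalently π₀(n) + π₁(n) = N+1 for all n). Then π is irreducible, and G(π) = Alt(A) if N is even, while G(π) = Sym(A) if N is odd. -/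
open Equiv

variable {A : Type*} [Fintype A]

/-! The renamings of `π` form a subgroup of the symmetric group. For a hyperelliptic pair, a right
induction followed by a left induction of the other type permutes both rows by a cycle, and the
result is a renaming of `π`; in terms of positions the two choices of type give the cycles
`(1 … N-1)` and `(2 … N)`, up to inversion. They generate a 2-transitive group, and one times the
inverse of the other is a 3-cycle, so by Jordan's theorem the group contains the alternating group.
For odd `N` these cycles are odd, so all permutations are renamings.

For even `N`, every Rauzy induction acts on the intersection matrix `Ω(π)` as a congruence by a
transvection, hence with determinant one. A renaming `ν` therefore gives an isometry of `Ω(π)` of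
determinant `sign ν`. But `Ω(π)` is congruent over the integers to the standard symplectic form,
whose isometries have determinant one.
-/

section PermutationGroups

variable {α : Type*}

theorem isMultiplyPretransitive_two_of_isCycle_mem {G : Subgroup (Perm α)} {f g : Perm α}
    {a b : α} (hab : a ≠ b) (hf : f.IsCycle) (hg : g.IsCycle) (hfG : f ∈ G) (hgG : g ∈ G)
    (hfa : ∀ x, f x = x ↔ x = a) (hgb : ∀ x, g x = x ↔ x = b) :
    MulAction.IsMultiplyPretransitive G α 2 := by
  have exists_map_to_a : ∀ x, ∃ σ ∈ G, σ x = a := by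
    have of_ne : ∀ x, x ≠ b → ∃ σ ∈ G, σ x = a := fun x hx => by
      obtain ⟨k, hk⟩ := hg.exists_zpow_eq (mt (hgb x).1 hx) (mt (hgb a).1 hab)
      exact ⟨g ^ k, zpow_mem hgG k, hk⟩
    intro x
    by_cases hx : x = b
    · obtain ⟨σ, hσ, hσx⟩ := of_ne (f x) (by rw [hx]; exact mt (hfa b).1 hab.symm)
      exact ⟨σ * f, mul_mem hσ hfG, hσx⟩
    · exact of_ne x hx
  have exists_map_to_pair : ∀ x y, x ≠ y → ∃ σ ∈ G, σ x = a ∧ σ y = b := fun x y hxy => by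
    obtain ⟨σ, hσ, hσx⟩ := exists_map_to_a x
    have hσy : σ y ≠ a := fun h => hxy (σ.injective (hσx.trans h.symm))
    obtain ⟨k, hk⟩ := hf.exists_zpow_eq (mt (hfa _).1 hσy) (mt (hfa b).1 hab.symm)
    have hfix : (f ^ k) a = a := Perm.zpow_apply_eq_self_of_apply_eq_self ((hfa a).2 rfl) k
    exact ⟨f ^ k * σ, mul_mem (zpow_mem hfG k) hσ, by simp [hσx, hfix], by simp [hk]⟩
  rw [MulAction.is_two_pretransitive_iff]
  intro x y x' y' hxy hxy'
  obtain ⟨σ, hσ, hσx, hσy⟩ := exists_map_to_pair x y hxy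
  obtain ⟨τ, hτ, hτx, hτy⟩ := exists_map_to_pair x' y' hxy'
  exact ⟨⟨τ⁻¹ * σ, mul_mem (inv_mem hτ) hσ⟩,
    show τ⁻¹ (σ x) = x' by rw [hσx, ← hτx, Perm.coe_inv, τ.symm_apply_apply],
    show τ⁻¹ (σ y) = y' by rw [hσy, ← hτy, Perm.coe_inv, τ.symm_apply_apply]⟩

variable [Fintype α] [DecidableEq α]

theorem eq_top_of_alternatingGroup_le_of_sign_eq_neg_one {G : Subgroup (Perm α)}
    (hG : alternatingGroup α ≤ G) {σ : Perm α} (hσG : σ ∈ G) (hσ : Perm.sign σ = -1) :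
    G = ⊤ := by
  refine (Subgroup.eq_top_iff' G).2 fun τ => ?_
  rcases Int.units_eq_one_or (Perm.sign τ) with hτ | hτ
  · exact hG (Perm.mem_alternatingGroup.2 hτ)
  · rw [← G.mul_mem_cancel_left hσG]
    exact hG (Perm.mem_alternatingGroup.2 (by rw [map_mul, hσ, hτ, neg_mul_neg, one_mul]))

theorem alternatingGroup_le_of_le_comap_permCongrHom {β : Type*} [Fintype β] [DecidableEq β]
    (e : α ≃ β) {G : Subgroup (Perm α)}
    (hG : alternatingGroup β ≤ G.comap e.symm.permCongrHom.toMonoidHom) :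
    alternatingGroup α ≤ G := by
  intro σ hσ
  have heσ : e.permCongr σ ∈ alternatingGroup β :=
    Perm.mem_alternatingGroup.2 ((Perm.sign_permCongr e σ).trans hσ)
  have hmem : e.symm.permCongr (e.permCongr σ) ∈ G := hG heσ
  rwa [← permCongr_symm, symm_apply_apply] at hmem

end PermutationGroups

section IntervalCycles

variable {n : ℕ}

theorem val_cycleIcc_apply {i j : Fin n} (hij : i ≤ j) (k : Fin n) :
    (Fin.cycleIcc i j k : ℕ) =
      if k < i ∨ j < k then (k : ℕ) else if k = j then (i : ℕ) else k + 1 := by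
  have : NeZero n := ⟨k.pos.ne'⟩
  split_ifs with hout hk
  · rcases hout with hk | hk
    · rw [Fin.cycleIcc_of_lt hk]
    · rw [Fin.cycleIcc_of_gt hk]
  · rw [hk, Fin.cycleIcc_of_last hij]
  · rw [not_or, not_lt, not_lt] at hout
    have hkj : k < j := lt_of_le_of_ne hout.2 hk
    rw [Fin.cycleIcc_of_ge_of_lt hout.1 hkj, Fin.val_add_one_of_lt' (by omega)]

theorem val_cycleIcc_inv_apply {i j : Fin n} (hij : i ≤ j) (k : Fin n) :
    ((Fin.cycleIcc i j)⁻¹ k : ℕ) =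
      if k < i ∨ j < k then (k : ℕ) else if k = i then (j : ℕ) else k - 1 := by
  obtain ⟨k, rfl⟩ := (Fin.cycleIcc i j).surjective k
  rw [Perm.coe_inv, symm_apply_apply]
  have hval := val_cycleIcc_apply hij k
  simp only [Fin.ext_iff, Fin.lt_def, Fin.le_def] at hij hval ⊢
  split_ifs at hval ⊢ <;> omega

theorem cycleIcc_apply_eq_self_iff {i j : Fin n} (hij : i < j) (k : Fin n) :
    Fin.cycleIcc i j k = k ↔ k < i ∨ j < k := by
  rw [Fin.ext_iff, val_cycleIcc_apply hij.le]
  simp only [Fin.lt_def, Fin.ext_iff] at hij ⊢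
  split_ifs <;> omega

theorem revPerm_permCongr_cycleIcc_inv {i j : Fin n} (hij : i ≤ j) :
    Fin.revPerm.permCongr (Fin.cycleIcc i j)⁻¹ = Fin.cycleIcc j.rev i.rev := by
  ext k
  simp only [permCongr_apply, Fin.revPerm_symm, Fin.revPerm_apply, Fin.val_rev,
    val_cycleIcc_apply (Fin.rev_le_rev.2 hij), val_cycleIcc_inv_apply hij]
  simp only [Fin.ext_iff, Fin.lt_def, Fin.val_rev]
  split_ifs <;> omega

variable [NeZero n]

theorem val_one_of_two_le (hn : 2 ≤ n) : ((1 : Fin n) : ℕ) = 1 := by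
  rw [Fin.val_one', Nat.mod_eq_of_lt hn]

theorem val_rev_zero : ((0 : Fin n).rev : ℕ) = n - 1 := by
  rw [Fin.val_rev, Fin.val_zero]

theorem le_rev_zero (k : Fin n) : k ≤ Fin.rev 0 := by
  rw [Fin.le_def, val_rev_zero]
  omega

theorem val_rev_one (hn : 2 ≤ n) : ((1 : Fin n).rev : ℕ) = n - 2 := by
  rw [Fin.val_rev, val_one_of_two_le hn]

theorem revPerm_permCongr_cycleIcc_zero_rev_one_inv :
    Fin.revPerm.permCongr (Fin.cycleIcc 0 (Fin.rev 1))⁻¹ =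
      Fin.cycleIcc (1 : Fin n) (Fin.rev 0) := by
  rw [revPerm_permCongr_cycleIcc_inv (Fin.zero_le _), Fin.rev_rev]

theorem isThreeCycle_cycleIcc_inv_mul_cycleIcc (hn : 3 ≤ n) :
    ((Fin.cycleIcc 0 (Fin.rev 1))⁻¹ * Fin.cycleIcc 1 (Fin.rev 0) : Perm (Fin n)).IsThreeCycle := by
  have hn₂ : 2 ≤ n := by omega
  have hswaps : (Fin.cycleIcc 0 (Fin.rev 1))⁻¹ * Fin.cycleIcc 1 (Fin.rev 0) =
      swap (0 : Fin n) (Fin.rev 0) * swap 0 (Fin.rev 1) := by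
    rw [inv_mul_eq_iff_eq_mul]
    ext k
    have hk := k.isLt
    rw [Perm.mul_apply, Perm.mul_apply, val_cycleIcc_apply (Fin.zero_le _),
      val_cycleIcc_apply (by rw [Fin.le_def, val_one_of_two_le hn₂, val_rev_zero]; omega)]
    simp only [swap_apply_def, Fin.ext_iff, Fin.lt_def, apply_ite Fin.val, Fin.val_zero,
      val_one_of_two_le hn₂, val_rev_zero, val_rev_one hn₂]
    split_ifs <;> omega
  rw [hswaps]
  apply Perm.isThreeCycle_swap_mul_swap_same <;>
    rw [Ne, Fin.ext_iff] <;>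
    simp only [Fin.val_zero, val_rev_zero, val_rev_one hn₂] <;> omega

theorem alternatingGroup_le_of_cycleIcc_mem {G : Subgroup (Perm (Fin n))} (hn : 2 ≤ n)
    (h₀ : Fin.cycleIcc 0 (Fin.rev 1) ∈ G) (h₁ : Fin.cycleIcc 1 (Fin.rev 0) ∈ G) :
    alternatingGroup (Fin n) ≤ G := by
  rcases hn.eq_or_lt with rfl | hn₃
  · rw [alternatingGroup.eq_bot_of_card_le_two (by simp)]
    exact bot_le
  have lt₀ : (0 : Fin n) < Fin.rev 1 := by
    rw [Fin.lt_def, Fin.val_zero, val_rev_one hn]; omega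
  have lt₁ : (1 : Fin n) < Fin.rev 0 := by
    rw [Fin.lt_def, val_one_of_two_le hn, val_rev_zero]; omega
  have fixed₀ (x : Fin n) : Fin.cycleIcc 0 (Fin.rev 1) x = x ↔ x = Fin.rev 0 := by
    rw [cycleIcc_apply_eq_self_iff lt₀, Fin.ext_iff, Fin.lt_def, Fin.lt_def, val_rev_one hn,
      val_rev_zero, Fin.val_zero]
    omega
  have fixed₁ (x : Fin n) : Fin.cycleIcc 1 (Fin.rev 0) x = x ↔ x = 0 := by
    rw [cycleIcc_apply_eq_self_iff lt₁, Fin.ext_iff, Fin.lt_def, Fin.lt_def, val_rev_zero,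
      val_one_of_two_le hn, Fin.val_zero]
    omega
  have rev_zero_ne_zero : (Fin.rev 0 : Fin n) ≠ 0 :=
    (lt₀.trans_le (Fin.rev_le_rev.2 (Fin.zero_le _))).ne'
  have htrans : MulAction.IsMultiplyPretransitive G (Fin n) 2 :=
    isMultiplyPretransitive_two_of_isCycle_mem rev_zero_ne_zero
      (Fin.isCycle_cycleIcc lt₀) (Fin.isCycle_cycleIcc lt₁) h₀ h₁ fixed₀ fixed₁
  exact Perm.alternatingGroup_le_of_isPreprimitive_of_isThreeCycle_mem
    (MulAction.isPreprimitive_of_is_two_pretransitive htrans)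
    (isThreeCycle_cycleIcc_inv_mul_cycleIcc hn₃) (mul_mem (inv_mem h₀) h₁)

theorem sign_cycleIcc_zero_rev_one (hn : 2 ≤ n) (hodd : Odd n) :
    Perm.sign (Fin.cycleIcc (0 : Fin n) (Fin.rev 1)) = -1 := by
  rw [Fin.sign_cycleIcc_of_le (Fin.zero_le _), Fin.val_zero, val_rev_one hn, Nat.sub_zero]
  exact Odd.neg_one_pow (Nat.Odd.sub_even hn hodd even_two)

end IntervalCycles

section Congruence

open Matrix

variable {ι R : Type*} [Fintype ι] [DecidableEq ι] [CommRing R]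

/-- Congruence of square matrices (equivalence of the bilinear forms they represent) through a
base change of determinant one. -/
def SLCongruent (M M' : Matrix ι ι R) : Prop :=
  ∃ B : Matrix ι ι R, B.det = 1 ∧ M' = B * M * Bᵀ

namespace SLCongruent

variable {M M' M'' : Matrix ι ι R}

theorem refl (M : Matrix ι ι R) : SLCongruent M M :=
  ⟨1, det_one, by rw [transpose_one, Matrix.one_mul, Matrix.mul_one]⟩

theorem trans : SLCongruent M M' → SLCongruent M' M'' → SLCongruent M M'' := by
  rintro ⟨B, hB, rfl⟩ ⟨C, hC, rfl⟩
  exact ⟨C * B, by rw [det_mul, hB, hC, one_mul], by simp only [transpose_mul, Matrix.mul_assoc]⟩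

theorem neg : SLCongruent M M' → SLCongruent (-M) (-M') := by
  rintro ⟨B, hB, rfl⟩
  exact ⟨B, hB, by rw [Matrix.mul_neg, Matrix.neg_mul]⟩

theorem transpose : SLCongruent M M' → SLCongruent Mᵀ M'ᵀ := by
  rintro ⟨B, hB, rfl⟩
  exact ⟨B, hB, by simp only [transpose_mul, transpose_transpose, Matrix.mul_assoc]⟩

end SLCongruent

theorem slCongruent_of_row_add {M M' : Matrix ι ι R} {l w : ι} (hlw : l ≠ w)
    (hM : Mᵀ = -M) (hM' : M'ᵀ = -M') (hMw : M w w = 0) (hMl : M l l = 0) (hMl' : M' l l = 0)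
    (hrest : ∀ x y, x ≠ l → y ≠ l → M' x y = M x y)
    (hrow : ∀ y, y ≠ l → M' l y = M l y + M w y) : SLCongruent M M' := by
  have skew (x y : ι) : M x y = -M y x := congrFun₂ hM y x
  have skew' (x y : ι) : M' x y = -M' y x := congrFun₂ hM' y x
  have htranspose : (transvection l w (1 : R))ᵀ = transvection w l 1 := by
    simp [transvection, transpose_add, transpose_single]
  refine ⟨transvection l w 1, det_transvection_of_ne _ _ hlw _, ?_⟩
  rw [htranspose]
  ext x y
  rcases eq_or_ne y l with rfl | hy
  · rw [mul_transvection_apply_same]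
    rcases eq_or_ne x y with rfl | hx
    · rw [transvection_mul_apply_same, transvection_mul_apply_same, hMl', hMl, hMw, skew w x]
      ring
    · rw [transvection_mul_apply_of_ne _ _ _ _ hx, transvection_mul_apply_of_ne _ _ _ _ hx,
        skew' x y, hrow x hx, skew x y, skew x w]
      ring
  · rw [mul_transvection_apply_of_ne _ _ _ _ hy]
    rcases eq_or_ne x l with rfl | hx
    · rw [transvection_mul_apply_same, hrow y hy, one_mul]
    · rw [transvection_mul_apply_of_ne _ _ _ _ hx, hrest x y hx hy]

theorem det_eq_one_of_preserves_mul_J_mul_transpose {P C : Matrix (ι ⊕ ι) (ι ⊕ ι) R}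
    (hP : IsUnit P.det) (h : C * (P * J ι R * Pᵀ) * Cᵀ = P * J ι R * Pᵀ) : C.det = 1 := by
  have inv_mul : P⁻¹ * P = 1 := nonsing_inv_mul P hP
  have transpose_mul_inv : Pᵀ * (P⁻¹)ᵀ = 1 := by rw [← transpose_mul, inv_mul, transpose_one]
  have hmem : P⁻¹ * C * P ∈ symplecticGroup ι R := by
    rw [SymplecticGroup.mem_iff]
    calc P⁻¹ * C * P * J ι R * (P⁻¹ * C * P)ᵀ
        = P⁻¹ * (C * (P * J ι R * Pᵀ) * Cᵀ) * (P⁻¹)ᵀ := by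
          simp only [transpose_mul, Matrix.mul_assoc]
      _ = (P⁻¹ * P) * J ι R * (Pᵀ * (P⁻¹)ᵀ) := by rw [h]; simp only [Matrix.mul_assoc]
      _ = J ι R := by rw [inv_mul, transpose_mul_inv, Matrix.one_mul, Matrix.mul_one]
  rw [← det_conj' ((isUnit_iff_isUnit_det P).2 hP) C]
  exact SymplecticGroup.det_eq_one hmem

-- Sorting the positions of a hyperelliptic pair by parity puts its intersection matrix into the
-- block form below, with `T` the strictly upper triangular all-ones matrix.
theorem fromBlocks_sub_transpose_eq (T : Matrix ι ι R) :
    fromBlocks (T - Tᵀ) (T - Tᵀ + 1) (T - Tᵀ - 1) (T - Tᵀ) =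
      fromBlocks 1 T 1 (T - 1) * J ι R * (fromBlocks 1 T 1 (T - 1))ᵀ := by
  simp only [J, fromBlocks_transpose, fromBlocks_multiply, transpose_one, transpose_sub]
  congr 1 <;> noncomm_ring

theorem isUnit_det_fromBlocks_one (T : Matrix ι ι R) :
    IsUnit (fromBlocks 1 T 1 (T - 1)).det := by
  rw [det_fromBlocks_one₁₁, Matrix.one_mul, sub_sub_cancel_left, ← isUnit_iff_isUnit_det]
  exact isUnit_one.neg

theorem det_eq_one_of_preserves_fromBlocks (T : Matrix ι ι R) {C : Matrix (ι ⊕ ι) (ι ⊕ ι) R}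
    (h : C * fromBlocks (T - Tᵀ) (T - Tᵀ + 1) (T - Tᵀ - 1) (T - Tᵀ) * Cᵀ =
      fromBlocks (T - Tᵀ) (T - Tᵀ + 1) (T - Tᵀ - 1) (T - Tᵀ)) : C.det = 1 := by
  rw [fromBlocks_sub_transpose_eq] at h
  exact det_eq_one_of_preserves_mul_J_mul_transpose (isUnit_det_fromBlocks_one T) h

end Congruence

section Renaming

theorem RightMove.pairRename {π ρ : RPair A} (h : RightMove π ρ) (ν : Perm A) :
    RightMove (pairRename π ν) (pairRename ρ ν) := by
  obtain ⟨ε, zc, zo, hzc, hzo, hε, hfix, hzo', hshift⟩ := h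
  refine ⟨ε, ν.symm zc, ν.symm zo, ?_⟩
  simp only [_root_.pairRename, trans_apply, apply_symm_apply, hε, true_and]
  exact ⟨fun x => hzc (ν x), fun x => hzo (ν x), fun b => hfix (ν b), hzo',
    fun b hb hbo => hshift (ν b) hb (mt ν.eq_symm_apply.2 hbo)⟩

theorem LeftMove.pairRename {π ρ : RPair A} (h : LeftMove π ρ) (ν : Perm A) :
    LeftMove (pairRename π ν) (pairRename ρ ν) := by
  obtain ⟨ε, ac, ao, hac, hao, hε, hfix, hao', hshift⟩ := h
  refine ⟨ε, ν.symm ac, ν.symm ao, ?_⟩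
  simp only [_root_.pairRename, trans_apply, apply_symm_apply, hε, true_and]
  exact ⟨fun x => hac (ν x), fun x => hao (ν x), fun b => hfix (ν b), hao',
    fun b hb hbo => hshift (ν b) hb (mt ν.eq_symm_apply.2 hbo)⟩

theorem pairRename_mem_EClass {π ρ : RPair A} (h : ρ ∈ EClass π) (ν : Perm A) :
    pairRename ρ ν ∈ EClass (pairRename π ν) :=
  Relation.ReflTransGen.lift (pairRename · ν)
    (fun _ _ => Or.imp (RightMove.pairRename · ν) (LeftMove.pairRename · ν)) _ _ h

/-- The set `renamings π` as a submonoid of the symmetric group of the alphabet. -/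
def renamingSubmonoid (π : RPair A) : Submonoid (Perm A) where
  carrier := renamings π
  mul_mem' {_ ν} hμ hν := Relation.ReflTransGen.trans hν (pairRename_mem_EClass hμ ν)
  one_mem' := Relation.ReflTransGen.refl

/-- The set `renamings π` as a subgroup of the symmetric group of the alphabet. Inverses come
from finiteness of the group, not from reversing Rauzy inductions. -/
def renamingGroup (π : RPair A) : Subgroup (Perm A) where
  __ := renamingSubmonoid π
  inv_mem' {_} hν := Submonoid.powers_le.2 hν
    (mem_powers_iff_mem_zpowers.2 (inv_mem (Subgroup.mem_zpowers _)))

theorem coe_renamingGroup (π : RPair A) : (renamingGroup π : Set (Perm A)) = renamings π :=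
  rfl

end Renaming

section IntersectionMatrix

open Matrix

/-- The `0`-`1` matrix of the strict linear order on the alphabet given by a row of a pair. -/
def orderMatrix (e : A ≃ Fin (Fintype.card A)) : Matrix A A ℤ :=
  of fun x y => if e x < e y then 1 else 0

/-- The intersection matrix `Ω(π)`, with the sign normalised so that row `ε` of the pair counts
positively. -/
def intersectionMatrix (π : RPair A) (ε : Bool) : Matrix A A ℤ :=
  orderMatrix (π ε) - orderMatrix (π (!ε))

theorem intersectionMatrix_apply (π : RPair A) (ε : Bool) (x y : A) :
    intersectionMatrix π ε x y =
      (if π ε x < π ε y then 1 else 0) - (if π (!ε) x < π (!ε) y then 1 else 0) :=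
  rfl

theorem intersectionMatrix_not (π : RPair A) (ε : Bool) :
    intersectionMatrix π (!ε) = -intersectionMatrix π ε := by
  rw [intersectionMatrix, intersectionMatrix, Bool.not_not, neg_sub]

theorem intersectionMatrix_apply_self (π : RPair A) (ε : Bool) (x : A) :
    intersectionMatrix π ε x x = 0 := by
  simp [intersectionMatrix_apply]

theorem orderMatrix_add_transpose [DecidableEq A] (e : A ≃ Fin (Fintype.card A)) :
    orderMatrix e + (orderMatrix e)ᵀ = of fun x y => if x = y then 0 else 1 := by
  ext x y
  rcases lt_trichotomy (e x) (e y) with h | h | h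
  · simp [orderMatrix, h, h.not_gt, ne_of_apply_ne e h.ne]
  · simp [orderMatrix, e.injective h]
  · simp [orderMatrix, h, h.not_gt, ne_of_apply_ne e h.ne']

theorem transpose_intersectionMatrix (π : RPair A) (ε : Bool) :
    (intersectionMatrix π ε)ᵀ = -intersectionMatrix π ε := by
  classical
  have h := (orderMatrix_add_transpose (π ε)).trans (orderMatrix_add_transpose (π (!ε))).symm
  rw [intersectionMatrix, transpose_sub, neg_sub, sub_eq_sub_iff_add_eq_add, add_comm, h, add_comm]

theorem intersectionMatrix_pairRename (π : RPair A) (ν : Perm A) (ε : Bool) :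
    intersectionMatrix (pairRename π ν) ε = (intersectionMatrix π ε).submatrix ν ν :=
  rfl

/-- The pair read from right to left, which exchanges left and right Rauzy inductions. -/
def pairReverse (π : RPair A) : RPair A := fun ε => (π ε).trans Fin.revPerm

theorem intersectionMatrix_pairReverse (π : RPair A) (ε : Bool) :
    intersectionMatrix (pairReverse π) ε = (intersectionMatrix π ε)ᵀ := by
  ext x y
  simp [intersectionMatrix_apply, pairReverse]

theorem RightMove.exists_order {π ρ : RPair A} (h : RightMove π ρ) :
    ∃ (ε : Bool) (w l : A), l ≠ w ∧ (∀ x, π ε x ≤ π ε w) ∧ (∀ x, π (!ε) x ≤ π (!ε) l) ∧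
      ρ ε = π ε ∧
      (∀ x y, x ≠ l → y ≠ l → (ρ (!ε) x < ρ (!ε) y ↔ π (!ε) x < π (!ε) y)) ∧
      (∀ y, y ≠ l → (ρ (!ε) l < ρ (!ε) y ↔ π (!ε) w < π (!ε) y)) := by
  obtain ⟨ε, w, l, hw, hl, hε, hfix, hl', hshift⟩ := h
  have hval (x : A) (hx : x ≠ l) : (ρ (!ε) x : ℕ) =
      if (π (!ε) x : ℕ) ≤ π (!ε) w then (π (!ε) x : ℕ) else π (!ε) x + 1 := by
    split_ifs with hxw
    · rw [hfix x hxw]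
    · exact hshift x hxw hx
  have hlw : l ≠ w := by
    rintro rfl
    have hlast := hl ((ρ (!ε)).trans (π (!ε)).symm l)
    rw [trans_apply, apply_symm_apply, Fin.le_def] at hlast
    omega
  refine ⟨ε, w, l, hlw, hw, hl, hε, fun x y hx hy => ?_, fun y hy => ?_⟩
  · rw [Fin.lt_def, Fin.lt_def, hval x hx, hval y hy]
    split_ifs <;> omega
  · rw [Fin.lt_def, Fin.lt_def, hval y hy, hl']
    split_ifs <;> omega

theorem LeftMove.eq_or_rightMove_pairReverse {π ρ : RPair A} (h : LeftMove π ρ) :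
    ρ = π ∨ RightMove (pairReverse π) (pairReverse ρ) := by
  obtain ⟨ε, w, l, hw, hl, hε, hfix, hl', hshift⟩ := h
  have hlt (x : A) (hx : x ≠ l) : (π (!ε) l : ℕ) < π (!ε) x :=
    lt_of_le_of_ne (hl x) fun h => hx ((π (!ε)).injective (Fin.ext h.symm))
  rcases eq_or_ne l w with rfl | hlw
  · left
    funext δ
    rcases Bool.eq_or_eq_not δ ε with rfl | rfl
    · exact hε
    · exact Equiv.ext fun x => hfix x (hl x)
  · right
    refine ⟨ε, w, l, ?_⟩
    simp only [pairReverse, trans_apply, Fin.revPerm_apply, Fin.rev_le_rev, hε, Fin.rev_inj,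
      Fin.val_rev, true_and]
    refine ⟨hw, hl, hfix, ?_, fun x hxw hxl => ?_⟩
    · have := hlt w hlw.symm
      omega
    · have := hlt x hxl
      have := hshift x hxw hxl
      omega

variable [DecidableEq A]

theorem slCongruent_intersectionMatrix_of_slCongruent {π ρ : RPair A} {ε : Bool}
    (h : SLCongruent (intersectionMatrix π ε) (intersectionMatrix ρ ε)) (δ : Bool) :
    SLCongruent (intersectionMatrix π δ) (intersectionMatrix ρ δ) := by
  rcases Bool.eq_or_eq_not δ ε with rfl | rfl
  · exact h
  · rw [intersectionMatrix_not, intersectionMatrix_not]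
    exact h.neg

theorem RightMove.slCongruent {π ρ : RPair A} (h : RightMove π ρ) (δ : Bool) :
    SLCongruent (intersectionMatrix π δ) (intersectionMatrix ρ δ) := by
  obtain ⟨ε, w, l, hlw, hw, hl, hε, hrest, hrow⟩ := h.exists_order
  refine slCongruent_intersectionMatrix_of_slCongruent (ε := ε) ?_ δ
  refine slCongruent_of_row_add hlw (transpose_intersectionMatrix π ε)
    (transpose_intersectionMatrix ρ ε) (intersectionMatrix_apply_self π ε w)
    (intersectionMatrix_apply_self π ε l) (intersectionMatrix_apply_self ρ ε l) ?_ ?_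
  · intro x y hx hy
    simp only [intersectionMatrix_apply, hε, hrest x y hx hy]
  · intro y hy
    simp only [intersectionMatrix_apply, hε, hrow y hy, (hw y).not_gt, (hl y).not_gt, if_false]
    ring

theorem LeftMove.slCongruent {π ρ : RPair A} (h : LeftMove π ρ) (δ : Bool) :
    SLCongruent (intersectionMatrix π δ) (intersectionMatrix ρ δ) := by
  rcases h.eq_or_rightMove_pairReverse with rfl | hrev
  · exact .refl _
  · simpa only [intersectionMatrix_pairReverse, transpose_transpose] using
      (hrev.slCongruent δ).transpose

theorem slCongruent_of_mem_EClass {π ρ : RPair A} (h : ρ ∈ EClass π) (δ : Bool) :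
    SLCongruent (intersectionMatrix π δ) (intersectionMatrix ρ δ) := by
  induction (h : Relation.ReflTransGen _ π ρ) with
  | refl => exact .refl _
  | tail _ hmove ih =>
    exact ih.trans (hmove.elim (RightMove.slCongruent · δ) (LeftMove.slCongruent · δ))

theorem exists_isometry_det_eq_sign_of_mem_renamings {π : RPair A} {ν : Perm A}
    (hν : ν ∈ renamings π) (δ : Bool) :
    ∃ C : Matrix A A ℤ, C.det = Perm.sign ν ∧
      C * intersectionMatrix π δ * Cᵀ = intersectionMatrix π δ := by
  obtain ⟨B, hB, hΩ⟩ := slCongruent_of_mem_EClass hν δ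
  rw [intersectionMatrix_pairRename] at hΩ
  refine ⟨B.submatrix ν.symm id, ?_, ?_⟩
  · rw [det_permute, hB, mul_one, Perm.sign_symm, Int.cast_id]
  · calc B.submatrix ν.symm id * intersectionMatrix π δ * (B.submatrix ν.symm id)ᵀ
        = (B * intersectionMatrix π δ * Bᵀ).submatrix ν.symm ν.symm := rfl
      _ = intersectionMatrix π δ := by
        rw [← hΩ, submatrix_submatrix, self_comp_symm, submatrix_id_id]

end IntersectionMatrix

section Moves

variable [Nonempty A] {π : RPair A} {ε : Bool} {q : Fin (Fintype.card A)}

theorem rightMove_update_cycleIcc {w : A} (hw : π ε w = Fin.rev 0)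
    (hq : (π (!ε) w : ℕ) + 1 = q) :
    RightMove π (Function.update π (!ε) ((π (!ε)).trans (Fin.cycleIcc q (Fin.rev 0)))) := by
  refine ⟨ε, w, (π (!ε)).symm (Fin.rev 0), fun x => hw ▸ le_rev_zero _,
    fun x => by rw [apply_symm_apply]; exact le_rev_zero _,
    Function.update_of_ne (Bool.self_ne_not ε) _ _, ?_⟩
  simp only [Function.update_self, trans_apply, apply_symm_apply,
    Fin.ext_iff (n := Fintype.card A), val_cycleIcc_apply (le_rev_zero q),
    (le_rev_zero _).not_gt, or_false, if_false, if_true]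
  refine ⟨fun b hb => if_pos (Fin.lt_def.2 (by omega)), hq.symm, fun b hb hbl => ?_⟩
  rw [if_neg (fun h => by omega), if_neg fun h => hbl ((π (!ε)).eq_symm_apply.2 (Fin.ext h))]

theorem leftMove_update_cycleIcc {w : A} (hw : π ε w = 0) (hq : (q : ℕ) + 1 = π (!ε) w) :
    LeftMove π (Function.update π (!ε) ((π (!ε)).trans (Fin.cycleIcc 0 q)⁻¹)) := by
  refine ⟨ε, w, (π (!ε)).symm 0, fun x => hw ▸ Fin.zero_le _,
    fun x => by rw [apply_symm_apply]; exact Fin.zero_le _,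
    Function.update_of_ne (Bool.self_ne_not ε) _ _, ?_⟩
  simp only [Function.update_self, trans_apply, apply_symm_apply,
    Fin.ext_iff (n := Fintype.card A), val_cycleIcc_inv_apply (Fin.zero_le q),
    (Fin.zero_le _).not_gt, false_or, if_false, if_true]
  refine ⟨fun b hb => if_pos (Fin.lt_def.2 (by omega)), by omega, fun b hb hbl => ?_⟩
  rw [if_neg (fun h => by omega), if_neg fun h => hbl ((π (!ε)).eq_symm_apply.2 (Fin.ext h))]

theorem mem_EClass_of_row_eq_trans_cycleIcc (hA : 2 ≤ Fintype.card A) {w : A}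
    (hw : π ε w = Fin.rev 0) (hw' : π (!ε) w = 0) {ρ : RPair A}
    (hρ : ρ ε = (π ε).trans (Fin.cycleIcc 0 (Fin.rev 1))⁻¹)
    (hρ' : ρ (!ε) = (π (!ε)).trans (Fin.cycleIcc 1 (Fin.rev 0))) : ρ ∈ EClass π := by
  set σ := Function.update π (!ε) ((π (!ε)).trans (Fin.cycleIcc 1 (Fin.rev 0)))
  have hright : RightMove π σ :=
    rightMove_update_cycleIcc hw (by rw [hw', val_one_of_two_le hA, Fin.val_zero])
  have hσ : σ ε = π ε := Function.update_of_ne (Bool.self_ne_not ε) _ _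
  have hσ' : σ (!ε) = ρ (!ε) := (Function.update_self _ _ _).trans hρ'.symm
  have hσw : σ (!ε) w = 0 := by
    have zero_lt_one : (0 : Fin (Fintype.card A)) < 1 := by
      rw [Fin.lt_def, val_one_of_two_le hA, Fin.val_zero]
      exact one_pos
    rw [hσ', hρ', trans_apply, hw', Fin.cycleIcc_of_lt zero_lt_one]
  have hleft : LeftMove σ (Function.update σ (!!ε) _) :=
    leftMove_update_cycleIcc (q := Fin.rev 1) hσw (by
      rw [Bool.not_not, hσ, hw, val_rev_one hA, val_rev_zero]; omega)
  rw [Bool.not_not, hσ, ← hρ] at hleft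
  have hρ_eq : ρ = Function.update σ ε (ρ ε) :=
    Function.eq_update_iff.2 ⟨rfl, fun δ hδ => by rw [Bool.eq_not_of_ne hδ, hσ']⟩
  rw [hρ_eq]
  exact .tail (.single (.inl hright)) (.inr hleft)

end Moves

section Hyperelliptic

open Matrix

theorem pairIrreducible_of_extremal_letter {π : RPair A} {x : A} (hx₀ : (π false x : ℕ) = 0)
    (hx₁ : (π true x : ℕ) + 1 = Fintype.card A) : PairIrreducible π := by
  intro k hk
  have hle : (π true x : ℕ) ≤ k := hk x (by rw [Fin.le_def, hx₀]; exact Nat.zero_le _)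
  omega

theorem exists_sumEquiv_even_odd {m n : ℕ} (hn : n = m + m) :
    ∃ e : Fin m ⊕ Fin m ≃ Fin n,
      (∀ k, (e (.inl k) : ℕ) = 2 * k) ∧ ∀ k, (e (.inr k) : ℕ) = 2 * k + 1 := by
  let f : Fin m ⊕ Fin m → Fin n :=
    Sum.elim (fun k => ⟨2 * k, by omega⟩) (fun k => ⟨2 * k + 1, by omega⟩)
  have hf : Function.Injective f := by
    rintro (i | i) (j | j) hij <;>
      simp only [f, Sum.elim_inl, Sum.elim_inr, Fin.mk.injEq] at hij <;>
      first | omega | (congr 1; omega)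
  exact ⟨.ofBijective f ((Fintype.bijective_iff_injective_and_card f).2 ⟨hf, by simp [hn]⟩),
    fun _ => rfl, fun _ => rfl⟩

/-- The hyperelliptic pairs: the two rows list the letters in opposite orders. -/
def IsHyperelliptic (π : RPair A) : Prop :=
  ∀ x, (π false x : ℕ) + (π true x : ℕ) + 1 = Fintype.card A

namespace IsHyperelliptic

variable {π : RPair A}

theorem apply_not (h : IsHyperelliptic π) (ε : Bool) : π (!ε) = (π ε).trans Fin.revPerm := by
  ext x
  have := h x
  cases ε <;> simp only [Bool.not_false, Bool.not_true, trans_apply, Fin.revPerm_apply,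
    Fin.val_rev] <;> omega

theorem intersectionMatrix_apply (h : IsHyperelliptic π) (x y : A) :
    intersectionMatrix π false x y =
      (if π false x < π false y then 1 else 0) - (if π false y < π false x then 1 else 0) := by
  simp only [_root_.intersectionMatrix_apply, h.apply_not, trans_apply, Fin.revPerm_apply,
    Fin.rev_lt_rev]

theorem exists_submatrix_intersectionMatrix_eq_fromBlocks (h : IsHyperelliptic π) {m : ℕ}
    (hm : Fintype.card A = m + m) :
    ∃ (q : Fin m ⊕ Fin m ≃ A) (T : Matrix (Fin m) (Fin m) ℤ),
      (intersectionMatrix π false).submatrix q q =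
        fromBlocks (T - Tᵀ) (T - Tᵀ + 1) (T - Tᵀ - 1) (T - Tᵀ) := by
  obtain ⟨e, he_inl, he_inr⟩ := exists_sumEquiv_even_odd hm
  refine ⟨e.trans (π false).symm, of fun i j => if i < j then 1 else 0, ?_⟩
  ext (i | i) (j | j) <;>
    simp only [submatrix_apply, h.intersectionMatrix_apply, trans_apply, apply_symm_apply,
      Fin.lt_def, he_inl, he_inr, fromBlocks_apply₁₁, fromBlocks_apply₁₂, fromBlocks_apply₂₁,
      fromBlocks_apply₂₂, Matrix.sub_apply, Matrix.add_apply, transpose_apply, of_apply,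
      Matrix.one_apply, Fin.ext_iff] <;>
    split_ifs <;> omega

theorem pairIrreducible [Nonempty A] (h : IsHyperelliptic π) : PairIrreducible π := by
  obtain ⟨x, hx⟩ := (π false).surjective 0
  have hx₀ : (π false x : ℕ) = 0 := by rw [hx, Fin.val_zero]
  have hsum := h x
  exact pairIrreducible_of_extremal_letter hx₀ (by omega)

theorem permCongr_cycleIcc_inv_mem_renamingGroup [Nonempty A] (h : IsHyperelliptic π)
    (hA : 2 ≤ Fintype.card A) (ε : Bool) :
    (π ε).symm.permCongr (Fin.cycleIcc 0 (Fin.rev 1))⁻¹ ∈ renamingGroup π := by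
  have hw : π ε ((π ε).symm (Fin.rev 0)) = Fin.rev 0 := apply_symm_apply _ _
  have hw' : π (!ε) ((π ε).symm (Fin.rev 0)) = 0 := by
    rw [h.apply_not, trans_apply, hw, Fin.revPerm_apply, Fin.rev_rev]
  refine mem_EClass_of_row_eq_trans_cycleIcc hA hw hw' ?_ ?_
  · ext x
    simp [pairRename, permCongr_apply]
  · rw [← revPerm_permCongr_cycleIcc_zero_rev_one_inv]
    ext x
    simp [pairRename, permCongr_apply, h.apply_not]

theorem det_eq_one_of_isometry [DecidableEq A] (h : IsHyperelliptic π)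
    (hA : Even (Fintype.card A)) {C : Matrix A A ℤ}
    (hC : C * intersectionMatrix π false * Cᵀ = intersectionMatrix π false) : C.det = 1 := by
  obtain ⟨m, hm⟩ := hA
  obtain ⟨q, T, hT⟩ := h.exists_submatrix_intersectionMatrix_eq_fromBlocks hm
  rw [← det_submatrix_equiv_self q]
  apply det_eq_one_of_preserves_fromBlocks T
  rw [← hT, transpose_submatrix, submatrix_mul_equiv, submatrix_mul_equiv, hC]

theorem renamingGroup_le_alternatingGroup [DecidableEq A] (h : IsHyperelliptic π)
    (hA : Even (Fintype.card A)) :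
    renamingGroup π ≤ alternatingGroup A := by
  intro ν hν
  obtain ⟨C, hdet, hC⟩ := exists_isometry_det_eq_sign_of_mem_renamings hν false
  rw [h.det_eq_one_of_isometry hA hC] at hdet
  exact Perm.mem_alternatingGroup.2 (Units.ext hdet.symm)

theorem alternatingGroup_le_renamingGroup [DecidableEq A] [Nonempty A] (h : IsHyperelliptic π)
    (hA : 2 ≤ Fintype.card A) :
    alternatingGroup A ≤ renamingGroup π := by
  refine alternatingGroup_le_of_le_comap_permCongrHom (π false)
    (alternatingGroup_le_of_cycleIcc_mem hA ?_ ?_)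
  · exact inv_mem_iff.1 (h.permCongr_cycleIcc_inv_mem_renamingGroup hA false)
  · have hmem := h.permCongr_cycleIcc_inv_mem_renamingGroup hA true
    rw [show π true = (π false).trans Fin.revPerm from h.apply_not false] at hmem
    rw [← revPerm_permCongr_cycleIcc_zero_rev_one_inv]
    exact hmem

theorem renamingGroup_eq_top [Nonempty A] (h : IsHyperelliptic π) (hA : 2 ≤ Fintype.card A)
    (hodd : Odd (Fintype.card A)) : renamingGroup π = ⊤ := by
  classical
  refine eq_top_of_alternatingGroup_le_of_sign_eq_neg_one (h.alternatingGroup_le_renamingGroup hA)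
    (h.permCongr_cycleIcc_inv_mem_renamingGroup hA false) ?_
  rw [Perm.sign_permCongr, Perm.sign_inv, sign_cycleIcc_zero_rev_one hA hodd]

end IsHyperelliptic

end Hyperelliptic

/-- for the pair on `A = {1,…,N}` with `π₀(n) = n`,
`π₁(n) = N+1−n` (equivalently `π₀(n) + π₁(n) = N+1`, i.e. 0-indexed
`π₀(x) + π₁(x) + 1 = N` for all letters `x`), `π` is irreducible, and
`G(π) = Alt(A)` for `N` even, `G(π) = Sym(A)` for `N` odd. -/
theorem stmt10 {A : Type*} [Fintype A] [DecidableEq A] [Nonempty A]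
    (hN : 2 ≤ Fintype.card A) (π : RPair A)
    (h : ∀ x : A, (π false x : ℕ) + (π true x : ℕ) + 1 = Fintype.card A) :
    PairIrreducible π ∧
    (Even (Fintype.card A) →
      renamings π = (alternatingGroup A : Set (Equiv.Perm A))) ∧
    (Odd (Fintype.card A) → renamings π = Set.univ) := by
  have hπ : IsHyperelliptic π := h
  refine ⟨hπ.pairIrreducible, fun heven => ?_, fun hodd => ?_⟩
  · rw [← coe_renamingGroup, le_antisymm (hπ.renamingGroup_le_alternatingGroup heven)
      (hπ.alternatingGroup_le_renamingGroup hN)]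
  · rw [← coe_renamingGroup, hπ.renamingGroup_eq_top hN hodd, Subgroup.coe_top]
end

section
/- Let m, n ≥ 0 and let A = {a, b₁,…,b_m, c₁,…,c_m, d, e, f, g₁,…,g_n, h₁,…,h_n, z} consist of 2m+2n+5 distinct letters. Let π be the pair on A with π₀ listing A in the order a, b₁, c₁, b₂, c₂, …, b_m, c_m, d, e, f, g₁, h₁, g₂, h₂, …, g_n, h_n, z and π₁ listing A in the order z, c₁, b₁, c₂, b₂, …, c_m, b_m, f, e, d, h₁, g₁, h₂, g₂, …, h_n, g_n, a. Then π is irreducible and Alt(A) ⊆ G(π); moreover, if m = n then G(π) = Sym(A). -/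
open Equiv

variable {A : Type*} [Fintype A]

/-!
Write a pair as two words.  Rauzy moves rotate the part of a row behind (or before) the winning
letter, so they are invertible and give two operations on standard pairs
`(a W₁ y W₂ z, z V₁ y V₂ a)`: a *turn* around an interior letter `y`, which exchanges `W₁` with `W₂`
and `V₁` with `V₂` up to renaming by a transposition, and a *flip* around two interior letters,
which costs an even renaming.

A turn around `y` is realised both with the transposition of `y` and `z` and with that of `y` and
`a`.  Comparing the two puts a 3-cycle through `a`, `z`, `y` into `G(π)` for every interior `y`, and
these 3-cycles generate the alternating group.

For `m = n` an odd renaming is needed.  One turn and three flips carry a handle `b c / c b` across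
the letters `d`, `e`, `f` with even total sign, exchanging two further blocks on the way.  Carrying
all handles across, from both sides, exchanges the left and the right handles; the signs of the
turns that open, join and close this path multiply to `-1`.  Renaming the `2m` letters on the left
to the `2m` letters on the right undoes the exchange and is even, so `G(π)` has an odd element.
-/

/-- The two rows of a pair, each written as a word: the letters in the order of `π₀`, then in the
order of `π₁`.  Blocks occurring inside such a pair are recorded in the same format. -/
abbrev WordPair (α : Type*) := List α × List α

namespace WordPair

variable {α : Type*}

/-- Both rows read from right to left. -/
def reverse (s : WordPair α) : WordPair α := (s.1.reverse, s.2.reverse)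

/-- Both rows with every letter `x` replaced by `σ x`. -/
def rename (σ : Perm α) (s : WordPair α) : WordPair α := (s.1.map σ, s.2.map σ)

/-- No row contains a repeated letter. -/
def Simple (s : WordPair α) : Prop := s.1.Nodup ∧ s.2.Nodup

@[simp] theorem reverse_reverse (s : WordPair α) : s.reverse.reverse = s := by
  simp [reverse]

theorem rename_mul (σ τ : Perm α) (s : WordPair α) :
    rename (σ * τ) s = rename σ (rename τ s) := by
  simp [rename]

@[simp] theorem rename_one (s : WordPair α) : rename 1 s = s := by
  simp [rename]

theorem rename_inv_rename (σ : Perm α) (s : WordPair α) : rename σ⁻¹ (rename σ s) = s := by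
  rw [← rename_mul, inv_mul_cancel, rename_one]

theorem simple_rename {σ : Perm α} {s : WordPair α} : (rename σ s).Simple ↔ s.Simple := by
  simp only [Simple, rename, List.nodup_map_iff σ.injective]

/-! ### Rauzy moves on words -/

/-- A right Rauzy induction on words: the last letter `l` of the losing row is moved right behind
the winner `w`, which is the last letter of the other row. -/
inductive RightStep : WordPair α → WordPair α → Prop
  | bottom (T P S : List α) (w l : α) :
      RightStep (T ++ [w], P ++ w :: (S ++ [l])) (T ++ [w], P ++ w :: l :: S)
  | swap {s t : WordPair α} : RightStep s t → RightStep s.swap t.swap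

/-- A Rauzy induction on words; the left inductions are the right ones read backwards. -/
inductive Step : WordPair α → WordPair α → Prop
  | right {s t : WordPair α} : RightStep s t → Step s t
  | left {s t : WordPair α} : RightStep s t → Step s.reverse t.reverse

namespace Step

variable {s t : WordPair α}

theorem swap (h : Step s t) : Step s.swap t.swap := by
  cases h with
  | right h => exact .right h.swap
  | left h => exact .left h.swap

theorem reverse (h : Step s t) : Step s.reverse t.reverse := by
  cases h with
  | right h => exact .left h
  | left h => simpa using Step.right h

end Step

theorem RightStep.rename (σ : Perm α) {s t : WordPair α} (h : RightStep s t) :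
    RightStep (s.rename σ) (t.rename σ) := by
  induction h with
  | bottom T P S w l =>
    simpa [WordPair.rename] using RightStep.bottom (T.map σ) (P.map σ) (S.map σ) (σ w) (σ l)
  | swap _ ih => exact ih.swap

theorem Step.rename (σ : Perm α) {s t : WordPair α} (h : Step s t) :
    Step (s.rename σ) (t.rename σ) := by
  cases h with
  | right h => exact .right (h.rename σ)
  | left h => simpa [WordPair.rename, WordPair.reverse] using Step.left (h.rename σ)

theorem RightStep.perm {s t : WordPair α} (h : RightStep s t) :
    s.1.Perm t.1 ∧ s.2.Perm t.2 := by
  induction h with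
  | bottom T P S w l =>
    exact ⟨.refl _, .append_left P (.cons w (List.perm_append_singleton l S))⟩
  | swap _ ih => exact ih.symm

theorem Step.perm {s t : WordPair α} (h : Step s t) : s.1.Perm t.1 ∧ s.2.Perm t.2 := by
  cases h with
  | right h => exact h.perm
  | left h =>
    exact ⟨(List.reverse_perm _).trans (h.perm.1.trans (List.reverse_perm _).symm),
      (List.reverse_perm _).trans (h.perm.2.trans (List.reverse_perm _).symm)⟩

/-- Reachability by finitely many Rauzy moves. -/
def Reach : WordPair α → WordPair α → Prop := Relation.ReflTransGen Step

namespace Reach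

variable {s t u : WordPair α}

theorem refl (s : WordPair α) : Reach s s := Relation.ReflTransGen.refl

theorem trans (h : Reach s t) (h' : Reach t u) : Reach s u := Relation.ReflTransGen.trans h h'

theorem swap (h : Reach s t) : Reach s.swap t.swap :=
  Relation.ReflTransGen.lift Prod.swap (fun _ _ => Step.swap) _ _ h

theorem reverse (h : Reach s t) : Reach s.reverse t.reverse :=
  Relation.ReflTransGen.lift WordPair.reverse (fun _ _ => Step.reverse) _ _ h

theorem rename (σ : Perm α) (h : Reach s t) : Reach (s.rename σ) (t.rename σ) :=
  Relation.ReflTransGen.lift (WordPair.rename σ) (fun _ _ => Step.rename σ) _ _ h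

theorem simple (h : Reach s t) (hs : s.Simple) : t.Simple := by
  induction h with
  | refl => exact hs
  | tail _ hstep ih => exact ⟨hstep.perm.1.nodup ih.1, hstep.perm.2.nodup ih.2⟩

theorem rotate_bottom_after (T P S L : List α) (w : α) :
    Reach (T ++ [w], P ++ w :: (S ++ L)) (T ++ [w], P ++ w :: (L ++ S)) := by
  induction L using List.reverseRecOn generalizing S with
  | nil => simpa using refl _
  | append_singleton L l ih =>
    have move_last : Reach _ _ := .single (.right (.bottom T P (S ++ L) w l))
    simpa using move_last.trans (ih (l :: S))

theorem rotate_top_after (T P S L : List α) (w : α) :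
    Reach (P ++ w :: (S ++ L), T ++ [w]) (P ++ w :: (L ++ S), T ++ [w]) :=
  (rotate_bottom_after T P S L w).swap

theorem rotate_bottom_before (T P S L : List α) (w : α) :
    Reach (w :: T, S ++ L ++ w :: P) (w :: T, L ++ S ++ w :: P) := by
  simpa [WordPair.reverse] using
    (rotate_bottom_after T.reverse P.reverse L.reverse S.reverse w).reverse

theorem rotate_top_before (T P S L : List α) (w : α) :
    Reach (S ++ L ++ w :: P, w :: T) (L ++ S ++ w :: P, w :: T) :=
  (rotate_bottom_before T P S L w).swap

/-- A move inserts a single letter, so it is undone by rotating the remaining letters past it. -/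
theorem of_rightStep_symm (h : RightStep s t) : Reach t s := by
  induction h with
  | bottom T P S w l => simpa using rotate_bottom_after T P [l] S w
  | swap _ ih => exact ih.swap

theorem of_step_symm (h : Step s t) : Reach t s := by
  cases h with
  | right h => exact of_rightStep_symm h
  | left h => exact (of_rightStep_symm h).reverse

theorem symm (h : Reach s t) : Reach t s := by
  induction h with
  | refl => exact refl _
  | tail _ hstep ih => exact (of_step_symm hstep).trans ih

end Reach

/-- The renamings of `s` that Rauzy moves realise; the word version of `G(π)`. -/
def renamingGroup (s : WordPair α) : Subgroup (Perm α) where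
  carrier := {σ | Reach s (s.rename σ)}
  one_mem' := by simpa using Reach.refl s
  mul_mem' {σ τ} hσ hτ := by
    simpa only [Set.mem_ofPred_eq, rename_mul] using Reach.trans hσ (Reach.rename σ hτ)
  inv_mem' {σ} hσ := by
    simpa only [Set.mem_ofPred_eq, rename_inv_rename] using (Reach.rename σ⁻¹ hσ).symm

theorem mem_renamingGroup {s : WordPair α} {σ : Perm α} :
    σ ∈ s.renamingGroup ↔ Reach s (s.rename σ) := Iff.rfl

/-! ### Turns and flips of standard pairs -/

/-- The standard pair with outer letters `a`, `z` and interior `s`. -/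
def std (a z : α) (s : WordPair α) : WordPair α := (a :: (s.1 ++ [z]), z :: (s.2 ++ [a]))

theorem swap_std (a z : α) (s : WordPair α) : (std a z s).swap = std z a s.swap := rfl

theorem Reach.turn (a y z : α) (W₁ W₂ V₁ V₂ : List α) :
    Reach (std a z (W₁ ++ y :: W₂, V₁ ++ y :: V₂))
      (a :: (W₂ ++ z :: (W₁ ++ [y])), y :: (V₂ ++ z :: (V₁ ++ [a]))) := by
  have top := rotate_top_after (z :: (V₁ ++ y :: V₂)) [] (W₁ ++ [y]) (W₂ ++ [z]) a
  have bottom := rotate_bottom_before (W₂ ++ z :: (W₁ ++ [y])) [] (z :: V₁) (y :: V₂) a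
  simpa [std] using trans (by simpa [std] using top) (by simpa using bottom)

theorem Reach.flip (a x y z : α) (W₁ W₂ W₃ V₁ V₂ V₃ : List α) :
    Reach (std a z (W₁ ++ y :: (W₂ ++ x :: W₃), V₁ ++ y :: (V₂ ++ x :: V₃)))
      (y :: (W₃ ++ z :: (W₂ ++ a :: (W₁ ++ [x]))),
        x :: (V₃ ++ z :: (V₂ ++ a :: (V₁ ++ [y])))) := by
  have after_z := rotate_bottom_after (a :: (W₁ ++ y :: (W₂ ++ x :: W₃))) []
    (V₁ ++ [y]) (V₂ ++ x :: (V₃ ++ [a])) z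
  have after_y := rotate_top_after (z :: (V₂ ++ x :: (V₃ ++ a :: V₁))) (a :: W₁)
    (W₂ ++ [x]) (W₃ ++ [z]) y
  have before_a := rotate_bottom_before (W₁ ++ y :: (W₃ ++ z :: (W₂ ++ [x]))) (V₁ ++ [y])
    (z :: V₂) (x :: V₃) a
  have before_x := rotate_top_before (V₃ ++ z :: (V₂ ++ a :: (V₁ ++ [y]))) []
    (a :: W₁) (y :: (W₃ ++ z :: W₂)) x
  simp only [std, List.append_assoc, List.cons_append, List.nil_append] at *
  exact after_z.trans (after_y.trans (before_a.trans before_x))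

/-! ### Even renamings of standard pairs -/

section

variable [DecidableEq α]

theorem map_swap_of_notMem {x y : α} {l : List α} (hx : x ∉ l) (hy : y ∉ l) :
    l.map (Equiv.swap x y) = l :=
  (List.map_congr_left fun _ hc => swap_apply_of_ne_of_ne (ne_of_mem_of_not_mem hc hx)
    (ne_of_mem_of_not_mem hc hy)).trans l.map_id

theorem rename_swap_right_std {a y z : α} {W₁ W₂ V₁ V₂ : List α}
    (hs : (std a z (W₁ ++ y :: W₂, V₁ ++ y :: V₂)).Simple) :
    (std a z (W₂ ++ y :: W₁, V₂ ++ y :: V₁)).rename (Equiv.swap y z) =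
      (a :: (W₂ ++ z :: (W₁ ++ [y])), y :: (V₂ ++ z :: (V₁ ++ [a]))) := by
  obtain ⟨htop, hbot⟩ := hs
  simp only [std, List.nodup_cons, List.nodup_append, List.mem_append, List.mem_cons] at htop hbot
  have fix_a : Equiv.swap y z a = a := by grind
  have fix_block : ∀ l ∈ [W₁, W₂, V₁, V₂], l.map (Equiv.swap y z) = l := by
    intro l hl
    apply map_swap_of_notMem <;> grind
  simp [std, rename, fix_a, fix_block]

theorem Reach.turn_right {a y z : α} {W₁ W₂ V₁ V₂ : List α}
    (hs : (std a z (W₁ ++ y :: W₂, V₁ ++ y :: V₂)).Simple) :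
    Reach (std a z (W₁ ++ y :: W₂, V₁ ++ y :: V₂))
      ((std a z (W₂ ++ y :: W₁, V₂ ++ y :: V₁)).rename (Equiv.swap y z)) := by
  rw [rename_swap_right_std hs]
  exact Reach.turn a y z W₁ W₂ V₁ V₂

theorem Reach.turn_left {a y z : α} {W₁ W₂ V₁ V₂ : List α}
    (hs : (std a z (W₁ ++ y :: W₂, V₁ ++ y :: V₂)).Simple) :
    Reach (std a z (W₁ ++ y :: W₂, V₁ ++ y :: V₂))
      ((std a z (W₂ ++ y :: W₁, V₂ ++ y :: V₁)).rename (Equiv.swap y a)) :=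
  (Reach.turn_right (a := z) (z := a) (W₁ := V₁) (W₂ := V₂) (V₁ := W₁) (V₂ := W₂) hs.symm).swap

/-- The turns of `s` that fix `a` and that fix `z` lead to the same pair up to renaming. -/
theorem swap_mul_swap_mem_renamingGroup_std {a y z : α} {W₁ W₂ V₁ V₂ : List α}
    (hs : (std a z (W₁ ++ y :: W₂, V₁ ++ y :: V₂)).Simple) :
    Equiv.swap y z * Equiv.swap y a ∈ (std a z (W₁ ++ y :: W₂, V₁ ++ y :: V₂)).renamingGroup := by
  have turned : (std a z (W₂ ++ y :: W₁, V₂ ++ y :: V₁)).Simple :=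
    simple_rename.1 ((Reach.turn_right hs).simple hs)
  have loop := ((Reach.turn_right turned).symm.trans (Reach.turn_left turned)).rename
    (Equiv.swap y z)
  rw [← rename_mul, ← rename_mul, swap_mul_self, rename_one] at loop
  exact loop

theorem swap_mul_swap_mem_of_star {H : Subgroup (Perm α)} {a z : α}
    (hstar : ∀ y, y ≠ a → Equiv.swap a y * Equiv.swap a z ∈ H) {x y : α} (hxy : x ≠ y) :
    Equiv.swap x y * Equiv.swap a z ∈ H := by
  by_cases hx : x = a
  · exact hx ▸ hstar y (hx ▸ hxy.symm)
  by_cases hy : y = a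
  · rw [Equiv.swap_comm]
    exact hy ▸ hstar x hx
  have conj : Equiv.swap x y = Equiv.swap a x * Equiv.swap a y * Equiv.swap a x := by
    rw [Equiv.swap_comm a y, swap_mul_swap_mul_swap hy hxy.symm]
  have := H.mul_mem (H.mul_mem (hstar x hx) (H.inv_mem (hstar y hy))) (hstar x hx)
  simpa [conj, mul_assoc] using this

variable [Fintype α]

theorem alternatingGroup_le_of_star {H : Subgroup (Perm α)} {a z : α}
    (hstar : ∀ y, y ≠ a → Equiv.swap a y * Equiv.swap a z ∈ H) : alternatingGroup α ≤ H := by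
  have dichotomy (σ : Perm α) : (σ ∈ H ∧ Perm.sign σ = 1) ∨
      (Equiv.swap a z * σ ∈ H ∧ Perm.sign σ = -1) := by
    induction σ using Perm.swap_induction_on with
    | one => exact .inl ⟨H.one_mem, Perm.sign_one⟩
    | swap_mul σ x y hxy ih =>
      have hmem := swap_mul_swap_mem_of_star hstar hxy
      rcases ih with ⟨hσ, hsign⟩ | ⟨hσ, hsign⟩
      · refine .inr ⟨?_, by simp [Perm.sign_swap hxy, hsign]⟩
        simpa [mul_assoc] using H.mul_mem (H.inv_mem hmem) hσ
      · refine .inl ⟨?_, by simp [Perm.sign_swap hxy, hsign]⟩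
        simpa [mul_assoc] using H.mul_mem hmem hσ
  intro σ hσ
  rcases dichotomy σ with ⟨hmem, -⟩ | ⟨-, hodd⟩
  · exact hmem
  · rw [Perm.mem_alternatingGroup.1 hσ] at hodd
    exact absurd hodd (by decide)

theorem eq_top_of_alternatingGroup_le_of_odd_mem {H : Subgroup (Perm α)}
    (hH : alternatingGroup α ≤ H) {τ : Perm α} (hτ : τ ∈ H) (hodd : Perm.sign τ = -1) :
    H = ⊤ := by
  refine H.eq_top_iff'.2 fun σ => ?_
  rcases Int.units_eq_one_or (Perm.sign σ) with heven | hodd'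
  · exact hH (Perm.mem_alternatingGroup.2 heven)
  · have : σ * τ ∈ alternatingGroup α := by simp [Perm.mem_alternatingGroup, hodd, hodd']
    exact (H.mul_mem_cancel_right hτ).1 (hH this)

theorem alternatingGroup_le_renamingGroup_std {a z : α} {s : WordPair α}
    (hs : (std a z s).Simple) (htop : ∀ y, y ∈ (std a z s).1) (hbot : ∀ y, y ∈ (std a z s).2) :
    alternatingGroup α ≤ (std a z s).renamingGroup := by
  refine alternatingGroup_le_of_star (a := a) (z := z) fun y hya => ?_
  by_cases hyz : y = z
  · rw [hyz, swap_mul_self]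
    exact Subgroup.one_mem _
  obtain ⟨W, V⟩ := s
  have hyW : y ∈ W := by simpa [std, hya, hyz] using htop y
  have hyV : y ∈ V := by simpa [std, hya, hyz] using hbot y
  obtain ⟨W₁, W₂, rfl⟩ := List.append_of_mem hyW
  obtain ⟨V₁, V₂, rfl⟩ := List.append_of_mem hyV
  have hza : z ≠ a := fun h => by simp [std, Simple, h] at hs
  have conj : Equiv.swap a y * Equiv.swap a z = Equiv.swap y z * Equiv.swap y a := by
    rw [mul_swap_eq_swap_mul, swap_apply_left, swap_apply_of_ne_of_ne hza (Ne.symm hyz),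
      Equiv.swap_comm a y]
  exact conj ▸ swap_mul_swap_mem_renamingGroup_std hs

end

/-! ### Signed equivalence -/

section

variable [DecidableEq α]

theorem map_formPerm_of_disjoint {L l : List α} (h : L.Disjoint l) : l.map L.formPerm = l :=
  (List.map_congr_left fun _ hx => List.formPerm_apply_of_notMem (h.symm hx)).trans l.map_id

theorem formPerm_three {x y w : α} (h : [x, y, w].Nodup) :
    [x, y, w].formPerm x = y ∧ [x, y, w].formPerm y = w ∧ [x, y, w].formPerm w = x := by
  simp only [List.formPerm_cons_cons, List.formPerm_singleton]
  grind [Perm.mul_apply]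

theorem formPerm_four {x y w v : α} (h : [x, y, w, v].Nodup) :
    [x, y, w, v].formPerm x = y ∧ [x, y, w, v].formPerm y = w ∧ [x, y, w, v].formPerm w = v ∧
      [x, y, w, v].formPerm v = x := by
  simp only [List.formPerm_cons_cons, List.formPerm_singleton]
  grind [Perm.mul_apply]

variable [Fintype α]

theorem sign_formPerm_cons {x : α} {l : List α} (h : (x :: l).Nodup) :
    Perm.sign (x :: l).formPerm = (-1) ^ l.length := by
  induction l generalizing x with
  | nil => simp
  | cons y l ih =>
    have hxy : x ≠ y := by grind
    rw [List.formPerm_cons_cons, Perm.sign_mul, Perm.sign_swap hxy, ih h.of_cons, List.length_cons,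
      pow_succ']

/-- `t` is reachable from `s` up to a renaming of sign `ε`. -/
def SignEquiv (ε : ℤˣ) (s t : WordPair α) : Prop :=
  ∃ σ : Perm α, Perm.sign σ = ε ∧ Reach s (t.rename σ)

namespace SignEquiv

variable {ε δ : ℤˣ} {s t u : WordPair α}

theorem refl (s : WordPair α) : SignEquiv 1 s s :=
  ⟨1, Perm.sign_one, by simpa using Reach.refl s⟩

theorem trans (h : SignEquiv ε s t) (h' : SignEquiv δ t u) : SignEquiv (ε * δ) s u := by
  obtain ⟨σ, hσ, hst⟩ := h
  obtain ⟨τ, hτ, htu⟩ := h'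
  exact ⟨σ * τ, by rw [Perm.sign_mul, hσ, hτ], by rw [rename_mul]; exact hst.trans (htu.rename σ)⟩

theorem symm (h : SignEquiv ε s t) : SignEquiv ε t s := by
  obtain ⟨σ, hσ, hst⟩ := h
  refine ⟨σ⁻¹, by rw [Perm.sign_inv, hσ], ?_⟩
  simpa only [rename_inv_rename] using (hst.rename σ⁻¹).symm

theorem swap (h : SignEquiv ε s t) : SignEquiv ε s.swap t.swap :=
  h.imp fun _ hσ => ⟨hσ.1, hσ.2.swap⟩

theorem simple (h : SignEquiv ε s t) (hs : s.Simple) : t.Simple := by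
  obtain ⟨σ, -, hst⟩ := h
  exact simple_rename.1 (hst.simple hs)

theorem of_rename_formPerm_three {x y w : α} (hnodup : [x, y, w].Nodup)
    (h : t.rename [x, y, w].formPerm = s) : SignEquiv 1 s t :=
  ⟨[x, y, w].formPerm, (sign_formPerm_cons hnodup).trans (by simp [pow_succ]), h ▸ .refl _⟩

theorem of_rename_formPerm_four {x y w v : α} (hnodup : [x, y, w, v].Nodup)
    (h : t.rename [x, y, w, v].formPerm = s) : SignEquiv (-1) s t :=
  ⟨[x, y, w, v].formPerm, (sign_formPerm_cons hnodup).trans (by simp [pow_succ]), h ▸ .refl _⟩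

theorem turn {a y z : α} {W₁ W₂ V₁ V₂ : List α}
    (hs : (std a z (W₁ ++ y :: W₂, V₁ ++ y :: V₂)).Simple) :
    SignEquiv (-1) (std a z (W₁ ++ y :: W₂, V₁ ++ y :: V₂))
      (std a z (W₂ ++ y :: W₁, V₂ ++ y :: V₁)) := by
  have hyz : y ≠ z := by
    rintro rfl
    simp [std, Simple, List.nodup_append] at hs
  exact ⟨Equiv.swap y z, Perm.sign_swap hyz, Reach.turn_right hs⟩

theorem flip {a x y z : α} {W₁ W₂ W₃ V₁ V₂ V₃ : List α}
    (hs : (std a z (W₁ ++ y :: (W₂ ++ x :: W₃), V₁ ++ y :: (V₂ ++ x :: V₃))).Simple) :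
    SignEquiv 1 (std a z (W₁ ++ y :: (W₂ ++ x :: W₃), V₁ ++ y :: (V₂ ++ x :: V₃)))
      (std a z (W₃ ++ x :: (W₂ ++ y :: W₁), V₃ ++ x :: (V₂ ++ y :: V₁))) := by
  obtain ⟨htop, hbot⟩ := hs
  simp only [std, List.nodup_cons, List.nodup_append, List.mem_append, List.mem_cons] at htop hbot
  set σ := Equiv.swap z x * Equiv.swap a y with hσ
  have sign_eq : Perm.sign σ = 1 := by
    rw [Perm.sign_mul, Perm.sign_swap (by grind), Perm.sign_swap (by grind)]
    rfl
  have fix_block : ∀ l ∈ [W₁, W₂, W₃, V₁, V₂, V₃], l.map σ = l := by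
    intro l hl
    rw [hσ, Perm.coe_mul, ← List.map_map, map_swap_of_notMem, map_swap_of_notMem] <;> grind
  have move_letters : σ a = y ∧ σ y = a ∧ σ x = z ∧ σ z = x := by
    grind [Perm.mul_apply]
  refine ⟨σ, sign_eq, ?_⟩
  convert Reach.flip a x y z W₁ W₂ W₃ V₁ V₂ V₃ using 1
  simp [std, rename, fix_block, move_letters]

end SignEquiv

end

/-! ### Blocks of handles -/

/-- Interior with blocks `X`, `Y` and `R = (P, Q)` around three letters.  Moving a handle from `Y`
to `X` exchanges `P` and `Q`, which is why these two are kept as a pair. -/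
def transit (d e f : α) (X Y : WordPair α) (R : WordPair α × WordPair α) : WordPair α :=
  (X.1 ++ (Y.1 ++ d :: (R.1.1 ++ e :: f :: R.2.1)),
    X.2 ++ f :: (R.2.2 ++ e :: (Y.2 ++ d :: R.1.2)))

/-- The word with its first two letters exchanged, then the next two, and so on. -/
def swapAdjacent : List α → List α
  | [] => []
  | [x] => [x]
  | x :: y :: l => y :: x :: swapAdjacent l

/-- The block with top row `U` in which each consecutive pair of letters forms a handle, that is,
appears in the opposite order in the bottom row. -/
def handles (U : List α) : WordPair α := (U, swapAdjacent U)

/-- The pair of the theorem, for arbitrary words of handles on both sides of `d`, `e`, `f`. -/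
def mainPair (a d e f z : α) (U V : List α) : WordPair α :=
  std a z (U ++ d :: e :: f :: V, swapAdjacent U ++ f :: e :: d :: swapAdjacent V)

theorem length_swapAdjacent (U : List α) : (swapAdjacent U).length = U.length := by
  fun_induction swapAdjacent U <;> simp_all

theorem swapAdjacent_swapAdjacent (U : List α) : swapAdjacent (swapAdjacent U) = U := by
  fun_induction swapAdjacent U <;> simp_all [swapAdjacent]

theorem map_swapAdjacent {β : Type*} (φ : α → β) (U : List α) :
    (swapAdjacent U).map φ = swapAdjacent (U.map φ) := by
  fun_induction swapAdjacent U <;> simp_all [swapAdjacent]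

theorem rename_mainPair (σ : Perm α) (a d e f z : α) (U V : List α) :
    (mainPair a d e f z U V).rename σ =
      mainPair (σ a) (σ d) (σ e) (σ f) (σ z) (U.map σ) (V.map σ) := by
  simp [mainPair, std, rename, map_swapAdjacent]

theorem swap_mainPair (a d e f z : α) (U V : List α) :
    (mainPair a d e f z U V).swap =
      mainPair z f e d a (swapAdjacent U) (swapAdjacent V) := by
  simp [mainPair, swap_std, swapAdjacent_swapAdjacent]

theorem swap_transit_iterate (a d e f z : α) (X P Q : WordPair α) (k : ℕ) :
    (std a z (transit d e f X ([], []) (Prod.swap^[k] (P, Q)))).swap =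
      std z a (transit f e d X.swap ([], []) (Prod.swap^[k] (Q.swap, P.swap))) := by
  have hinv : Function.Involutive (Prod.swap : WordPair α × WordPair α → _) := Prod.swap_swap
  rcases k.even_or_odd with hk | hk
  · simp [hinv.iterate_even hk, swap_std, transit]
  · simp [hinv.iterate_odd hk, swap_std, transit]

theorem simple_mainPair_exchange {a d e f z : α} {U V : List α}
    (hs : (mainPair a d e f z U V).Simple) : (mainPair a d e f z V U).Simple := by
  classical
  exact ⟨hs.1.perm (List.perm_iff_count.2 fun x => by simp [mainPair, std, List.count_cons]; omega),
    hs.2.perm (List.perm_iff_count.2 fun x => by simp [mainPair, std, List.count_cons]; omega)⟩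

theorem simple_transit_rotate {a d e f z : α} {X P : WordPair α}
    (hs : (std a z (transit d e f X ([], []) (([], []), P))).Simple) :
    (std a z (transit d e f P ([], []) (X, ([], [])))).Simple := by
  classical
  exact ⟨hs.1.perm (List.perm_iff_count.2 fun x => by simp [transit, std, List.count_cons]; omega),
    hs.2.perm (List.perm_iff_count.2 fun x => by simp [transit, std, List.count_cons]; omega)⟩

section

variable [DecidableEq α] [Fintype α]

theorem signEquiv_turn_flip_flip_flip {a d e f p q z : α} {X X' Y Y' P P' Q Q' : List α}
    (hs : (std a z (X ++ p :: q :: (Y ++ d :: (P ++ e :: f :: Q)),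
      X' ++ f :: (Q' ++ e :: q :: p :: (Y' ++ d :: P')))).Simple) :
    SignEquiv (-1)
      (std a z (X ++ p :: q :: (Y ++ d :: (P ++ e :: f :: Q)),
        X' ++ f :: (Q' ++ e :: q :: p :: (Y' ++ d :: P'))))
      (std a z (X ++ f :: q :: (Y ++ p :: (Q ++ d :: e :: P)),
        X' ++ q :: f :: e :: (P' ++ d :: (Y' ++ p :: Q')))) := by
  have turn_q := SignEquiv.turn (a := a) (y := q) (z := z) (W₁ := X ++ [p])
    (W₂ := Y ++ d :: (P ++ e :: f :: Q)) (V₁ := X' ++ f :: (Q' ++ [e])) (V₂ := p :: (Y' ++ d :: P'))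
  have flip_d_e := SignEquiv.flip (a := a) (y := d) (x := e) (z := z) (W₁ := Y) (W₂ := P)
    (W₃ := f :: (Q ++ q :: (X ++ [p]))) (V₁ := p :: Y') (V₂ := P' ++ q :: (X' ++ f :: Q'))
    (V₃ := [])
  have flip_f_p := SignEquiv.flip (a := a) (y := f) (x := p) (z := z) (W₁ := [])
    (W₂ := Q ++ q :: X) (W₃ := e :: (P ++ d :: Y)) (V₁ := e :: (P' ++ q :: X')) (V₂ := Q' ++ [d])
    (V₃ := Y')
  have flip_d_q := SignEquiv.flip (a := a) (y := d) (x := q) (z := z) (W₁ := e :: P)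
    (W₂ := Y ++ p :: Q) (W₃ := X ++ [f]) (V₁ := Y' ++ p :: Q') (V₂ := f :: e :: P') (V₃ := X')
  simp only [List.append_assoc, List.cons_append, List.nil_append] at *
  have h₁ := turn_q hs
  have h₂ := h₁.trans (flip_d_e (h₁.simple hs))
  have h₃ := h₂.trans (flip_f_p (h₂.simple hs))
  exact h₃.trans (flip_d_q (h₃.simple hs))

theorem signEquiv_transit_cons_cons {a d e f p q z : α} {X Y : WordPair α}
    {R : WordPair α × WordPair α}
    (hs : (std a z (transit d e f X (p :: q :: Y.1, q :: p :: Y.2) R)).Simple) :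
    SignEquiv 1 (std a z (transit d e f X (p :: q :: Y.1, q :: p :: Y.2) R))
      (std a z (transit d e f (X.1 ++ [p, q], X.2 ++ [q, p]) Y R.swap)) := by
  obtain ⟨X, X'⟩ := X
  obtain ⟨Y, Y'⟩ := Y
  obtain ⟨⟨P, P'⟩, Q, Q'⟩ := R
  simp only [transit, Prod.swap_prod_mk, List.cons_append, List.append_assoc, List.nil_append]
    at hs ⊢
  have path := signEquiv_turn_flip_flip_flip hs
  have htop : ([p, f, e, d] ++ (a :: z :: q :: (X ++ Y ++ P ++ Q))).Nodup :=
    hs.1.perm (List.perm_iff_count.2 fun x => by simp [std, List.count_cons]; omega)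
  have hbot : ([p, f, e, d] ++ (a :: z :: q :: (X' ++ Y' ++ P' ++ Q'))).Nodup :=
    hs.2.perm (List.perm_iff_count.2 fun x => by simp [std, List.count_cons]; omega)
  have fix_top := List.disjoint_of_nodup_append htop
  have fix_bot := List.disjoint_of_nodup_append hbot
  simp only [List.disjoint_cons_right, List.disjoint_append_right] at fix_top fix_bot
  have cycle := formPerm_four htop.of_append_left
  have relabel : (std a z (X ++ p :: q :: (Y ++ d :: (Q ++ e :: f :: P)),
      X' ++ q :: p :: f :: (P' ++ e :: (Y' ++ d :: Q')))).rename [p, f, e, d].formPerm =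
      std a z (X ++ f :: q :: (Y ++ p :: (Q ++ d :: e :: P)),
        X' ++ q :: f :: e :: (P' ++ d :: (Y' ++ p :: Q'))) := by
    simp [-List.formPerm_cons_cons, std, rename, cycle, fix_top, fix_bot, map_formPerm_of_disjoint,
      List.formPerm_apply_of_notMem]
  exact path.trans (.of_rename_formPerm_four htop.of_append_left relabel)

theorem signEquiv_transit_handles {a d e f z : α} {X : WordPair α} {Y : List α}
    {R : WordPair α × WordPair α} {k : ℕ} (hk : Y.length = 2 * k)
    (hs : (std a z (transit d e f X (handles Y) R)).Simple) :
    SignEquiv 1 (std a z (transit d e f X (handles Y) R))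
      (std a z (transit d e f (X.1 ++ Y, X.2 ++ swapAdjacent Y) ([], []) (Prod.swap^[k] R))) := by
  induction k generalizing X Y R with
  | zero =>
    obtain rfl := List.length_eq_zero_iff.1 hk
    simpa [handles, swapAdjacent] using SignEquiv.refl _
  | succ k ih =>
    obtain ⟨p, q, Y, rfl⟩ : ∃ p q l, Y = p :: q :: l := by
      match Y, hk with
      | p :: q :: l, _ => exact ⟨p, q, l, rfl⟩
    have move_handle := signEquiv_transit_cons_cons (Y := handles Y) hs
    have move_rest := ih (by grind) (move_handle.simple hs)
    simpa [swapAdjacent, handles] using move_handle.trans move_rest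

theorem signEquiv_mainPair_transit {a d e f z : α} {U V : List α}
    (hs : (mainPair a d e f z U V).Simple) :
    SignEquiv (-1) (mainPair a d e f z U V)
      (std a z (transit d e f ([], []) (handles V) (handles U, ([], [])))) := by
  have turn_f := SignEquiv.turn (a := a) (y := f) (z := z) (W₁ := U ++ [d, e]) (W₂ := V)
    (V₁ := swapAdjacent U) (V₂ := e :: d :: swapAdjacent V)
  simp only [List.append_assoc, List.cons_append, List.nil_append] at turn_f
  have htop : ([d, f, e] ++ (a :: z :: (U ++ V))).Nodup :=
    hs.1.perm (List.perm_iff_count.2 fun x => by simp [mainPair, std, List.count_cons]; omega)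
  have hbot : ([d, f, e] ++ (a :: z :: (swapAdjacent U ++ swapAdjacent V))).Nodup :=
    hs.2.perm (List.perm_iff_count.2 fun x => by simp [mainPair, std, List.count_cons]; omega)
  have fix_top := List.disjoint_of_nodup_append htop
  have fix_bot := List.disjoint_of_nodup_append hbot
  simp only [List.disjoint_cons_right, List.disjoint_append_right] at fix_top fix_bot
  have cycle := formPerm_three htop.of_append_left
  have relabel : (std a z (transit d e f ([], []) (handles V) (handles U, ([], [])))).rename
      [d, f, e].formPerm = std a z (V ++ f :: (U ++ [d, e]),
        e :: d :: (swapAdjacent V ++ f :: swapAdjacent U)) := by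
    simp [-List.formPerm_cons_cons, std, transit, handles, rename, cycle, fix_top, fix_bot,
      map_formPerm_of_disjoint, List.formPerm_apply_of_notMem]
  exact (turn_f hs).trans (.of_rename_formPerm_three htop.of_append_left relabel)

theorem signEquiv_transit_close {a d e f z : α} {X P : WordPair α}
    (hs : (std a z (transit d e f X ([], []) (P, ([], [])))).Simple) :
    SignEquiv (-1) (std a z (transit d e f X ([], []) (P, ([], []))))
      (std a z (transit d e f P ([], []) (([], []), X))) := by
  have turn_d := SignEquiv.turn (a := a) (y := d) (z := z) (W₁ := X.1) (W₂ := P.1 ++ [e, f])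
    (V₁ := X.2 ++ [f, e]) (V₂ := P.2)
  simp only [List.append_assoc, List.cons_append, List.nil_append] at turn_d
  have htop : ([d, e, f] ++ (a :: z :: (X.1 ++ P.1))).Nodup :=
    hs.1.perm (List.perm_iff_count.2 fun x => by simp [transit, std, List.count_cons]; omega)
  have hbot : ([d, e, f] ++ (a :: z :: (X.2 ++ P.2))).Nodup :=
    hs.2.perm (List.perm_iff_count.2 fun x => by simp [transit, std, List.count_cons]; omega)
  have fix_top := List.disjoint_of_nodup_append htop
  have fix_bot := List.disjoint_of_nodup_append hbot
  simp only [List.disjoint_cons_right, List.disjoint_append_right] at fix_top fix_bot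
  have cycle := formPerm_three htop.of_append_left
  have relabel : (std a z (transit d e f P ([], []) (([], []), X))).rename [d, e, f].formPerm =
      std a z (P.1 ++ e :: f :: d :: X.1, P.2 ++ d :: (X.2 ++ [f, e])) := by
    simp [-List.formPerm_cons_cons, std, transit, rename, cycle, fix_top, fix_bot,
      map_formPerm_of_disjoint, List.formPerm_apply_of_notMem]
  exact (turn_d hs).trans (.of_rename_formPerm_three htop.of_append_left relabel)

theorem signEquiv_transit_exchange {a d e f z : α} {U V : WordPair α} {k : ℕ}
    (hs : (std a z (transit d e f V ([], []) (Prod.swap^[k] (U, ([], []))))).Simple) :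
    SignEquiv (-1) (std a z (transit d e f V ([], []) (Prod.swap^[k] (U, ([], [])))))
      (std a z (transit d e f U ([], []) (Prod.swap^[k] (([], []), V)))) := by
  have hinv : Function.Involutive (Prod.swap : WordPair α × WordPair α → _) := Prod.swap_swap
  rcases k.even_or_odd with hk | hk
  · rw [hinv.iterate_even hk] at hs ⊢
    exact signEquiv_transit_close hs
  · rw [hinv.iterate_odd hk] at hs ⊢
    exact (signEquiv_transit_close (simple_transit_rotate hs)).symm

theorem signEquiv_mainPair_gather {a d e f z : α} {U V : List α} {k : ℕ} (hk : V.length = 2 * k)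
    (hs : (mainPair a d e f z U V).Simple) :
    SignEquiv (-1) (mainPair a d e f z U V)
      (std a z (transit d e f (handles V) ([], []) (Prod.swap^[k] (handles U, ([], []))))) := by
  have gather := signEquiv_mainPair_transit hs
  exact gather.trans (signEquiv_transit_handles hk (gather.simple hs))

theorem signEquiv_mainPair_exchange {a d e f z : α} {U V : List α} {k : ℕ}
    (hU : U.length = 2 * k) (hV : V.length = 2 * k) (hs : (mainPair a d e f z U V).Simple) :
    SignEquiv (-1) (mainPair a d e f z U V) (mainPair a d e f z V U) := by
  have gather_V := signEquiv_mainPair_gather hV hs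
  have exchange := signEquiv_transit_exchange (gather_V.simple hs)
  have swapped_simple : (mainPair z f e d a (swapAdjacent V) (swapAdjacent U)).Simple := by
    rw [← swap_mainPair]
    exact (simple_mainPair_exchange hs).symm
  have gather_U := (signEquiv_mainPair_gather (by rwa [length_swapAdjacent]) swapped_simple).swap
  rw [swap_mainPair, swap_transit_iterate] at gather_U
  simp only [handles, swapAdjacent_swapAdjacent, Prod.swap_prod_mk] at gather_U
  exact (gather_V.trans exchange).trans gather_U.symm

theorem exists_perm_exchange {U V : List α} (hlen : U.length = V.length) (hnodup : (U ++ V).Nodup) :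
    ∃ τ : Perm α, Perm.sign τ = (-1) ^ U.length ∧ U.map τ = V ∧ V.map τ = U ∧
      ∀ x, x ∉ U ++ V → τ x = x := by
  induction U generalizing V with
  | nil =>
    obtain rfl := List.length_eq_zero_iff.1 hlen.symm
    exact ⟨1, by simp⟩
  | cons x U ih =>
    obtain ⟨y, V, rfl⟩ := List.exists_cons_of_length_eq_add_one hlen.symm
    have hcons : (x :: y :: (U ++ V)).Nodup := hnodup.perm (List.perm_middle.cons x)
    simp only [List.nodup_cons, List.mem_cons, List.mem_append, not_or] at hcons
    obtain ⟨⟨hxy, hx⟩, hy, hrest⟩ := hcons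
    obtain ⟨τ, hsign, hUV, hVU, hfix⟩ := ih (Nat.succ_injective hlen) hrest
    refine ⟨Equiv.swap x y * τ, ?_, ?_, ?_, fun w hw => ?_⟩
    · rw [Perm.sign_mul, Perm.sign_swap hxy, hsign, List.length_cons, pow_succ']
    · rw [Perm.coe_mul, ← List.map_map, List.map_cons, hUV, hfix x (by simp [hx]), List.map_cons,
        swap_apply_left, map_swap_of_notMem hx.2 hy.2]
    · rw [Perm.coe_mul, ← List.map_map, List.map_cons, hVU, hfix y (by simp [hy]), List.map_cons,
        swap_apply_right, map_swap_of_notMem hx.1 hy.1]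
    · simp only [List.cons_append, List.mem_cons, List.mem_append, not_or] at hw
      rw [Perm.mul_apply, hfix w (by simp [hw]), swap_apply_of_ne_of_ne hw.1 hw.2.2.1]

end

theorem renamingGroup_mainPair_eq_top [Finite α] {a d e f z : α} {U V : List α} {k : ℕ}
    (hU : U.length = 2 * k) (hV : V.length = 2 * k) (hs : (mainPair a d e f z U V).Simple)
    (htop : ∀ y, y ∈ (mainPair a d e f z U V).1) (hbot : ∀ y, y ∈ (mainPair a d e f z U V).2) :
    (mainPair a d e f z U V).renamingGroup = ⊤ := by
  classical
  have := Fintype.ofFinite α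
  obtain ⟨σ, hσ, hreach⟩ := signEquiv_mainPair_exchange hU hV hs
  have hnodup : ([a, d, e, f, z] ++ (U ++ V)).Nodup :=
    hs.1.perm (List.perm_iff_count.2 fun x => by simp [mainPair, std, List.count_cons]; omega)
  obtain ⟨τ, hτ, hUV, hVU, hfix⟩ := exists_perm_exchange (hU.trans hV.symm) hnodup.of_append_right
  have fix_letter : ∀ x ∈ [a, d, e, f, z], τ x = x := fun x hx =>
    hfix x (List.disjoint_of_nodup_append hnodup hx)
  have rename_τ : (mainPair a d e f z U V).rename τ = mainPair a d e f z V U := by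
    simp [rename_mainPair, fix_letter, hUV, hVU]
  refine eq_top_of_alternatingGroup_le_of_odd_mem (τ := σ * τ)
    (alternatingGroup_le_renamingGroup_std hs htop hbot) ?_ ?_
  · rwa [mem_renamingGroup, rename_mul, rename_τ]
  · simp [hσ, hτ, hU]

/-! ### From words to pairs of bijections -/

/-- The word `l` lists the letters in the order of the positions given by `φ`. -/
def Lists [Fintype α] (φ : α ≃ Fin (Fintype.card α)) (l : List α) : Prop :=
  l.map (fun x => (φ x : ℕ)) = List.range (Fintype.card α)

namespace Lists

variable [Fintype α] {φ ψ : α ≃ Fin (Fintype.card α)} {l l' : List α}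

theorem length (h : Lists φ l) : l.length = Fintype.card α := by
  simpa using congrArg List.length h

theorem nodup (h : Lists φ l) : l.Nodup := by
  refine List.Nodup.of_map (fun x => (φ x : ℕ)) ?_
  rw [h]
  exact List.nodup_range

theorem mem (h : Lists φ l) (x : α) : x ∈ l := by
  have hx : (φ x : ℕ) ∈ l.map fun x => (φ x : ℕ) := by
    rw [h, List.mem_range]
    exact (φ x).isLt
  obtain ⟨y, hy, hyx⟩ := List.mem_map.1 hx
  exact φ.injective (Fin.ext hyx) ▸ hy

theorem apply_getElem (h : Lists φ l) {i : ℕ} (hi : i < l.length) : (φ l[i] : ℕ) = i := by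
  have := congrArg (·[i]?) h
  simpa [hi, h.length ▸ hi] using this

theorem apply_eq_idxOf [DecidableEq α] (h : Lists φ l) (x : α) : (φ x : ℕ) = l.idxOf x := by
  have hx := List.idxOf_lt_length_of_mem (h.mem x)
  simpa using h.apply_getElem hx

theorem unique (h : Lists φ l) (h' : Lists ψ l) : φ = ψ := by
  classical
  ext x
  rw [h.apply_eq_idxOf, h'.apply_eq_idxOf]

theorem exists_of_perm (h : Lists φ l) (hp : l.Perm l') : ∃ ψ, Lists (α := α) ψ l' := by
  classical
  have hnodup : l'.Nodup := hp.nodup h.nodup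
  have hmem : ∀ x, x ∈ l' := fun x => hp.mem_iff.1 (h.mem x)
  have hlen : l'.length = Fintype.card α := by rw [← hp.length_eq, h.length]
  refine ⟨(hnodup.getEquivOfForallMemList l' hmem).symm.trans (finCongr hlen), ?_⟩
  refine List.ext_getElem (by simp [hlen]) fun i hi _ => ?_
  simpa [List.Nodup.getEquivOfForallMemList] using hnodup.idxOf_getElem i (by simpa using hi)

theorem reverse (h : Lists φ l) : Lists (φ.trans Fin.revPerm) l.reverse := by
  refine List.ext_getElem (by simp [h.length]) fun i hi _ => ?_
  have := h.length
  simp only [List.length_map, List.length_reverse] at hi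
  simp only [List.getElem_map, List.getElem_reverse, List.getElem_range, trans_apply,
    Fin.revPerm_apply, Fin.val_rev, h.apply_getElem]
  omega

theorem le_last {T : List α} {w : α} (h : Lists φ (T ++ [w])) (x : α) : φ x ≤ φ w := by
  have hw : (φ w : ℕ) = T.length := by simpa using h.apply_getElem (i := T.length) (by simp)
  have hlen := h.length
  rw [List.length_append, List.length_singleton] at hlen
  exact Fin.le_def.2 (by omega)

theorem rightMove {P S : List α} {w x : α} (h : Lists φ (P ++ w :: (S ++ [x])))
    (h' : Lists ψ (P ++ w :: x :: S)) :
    (∀ b, φ b ≤ φ w → ψ b = φ b) ∧ (ψ x : ℕ) = (φ w : ℕ) + 1 ∧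
      ∀ b, ¬ φ b ≤ φ w → b ≠ x → (ψ b : ℕ) = (φ b : ℕ) + 1 := by
  classical
  have hnodup := h.nodup
  simp only [Fin.le_def, Fin.ext_iff, h.apply_eq_idxOf, h'.apply_eq_idxOf]
  refine ⟨fun b => ?_, ?_, fun b => ?_⟩ <;> grind [h.mem]

end Lists

section

variable [Fintype α]

/-- The words of `s` list the two rows of `ρ`. -/
def Encodes (ρ : RPair α) (s : WordPair α) : Prop := Lists (ρ false) s.1 ∧ Lists (ρ true) s.2

/-- The pair `ρ` with its two rows exchanged. -/
def swapRows (ρ : RPair α) : RPair α := fun ε => ρ !ε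

/-- The pair `ρ` with both rows read from right to left. -/
def mirror (ρ : RPair α) : RPair α := fun ε => (ρ ε).trans Fin.revPerm

@[simp] theorem swapRows_swapRows (ρ : RPair α) : swapRows (swapRows ρ) = ρ := by
  funext ε
  simp [swapRows]

@[simp] theorem mirror_mirror (ρ : RPair α) : mirror (mirror ρ) = ρ := by
  funext ε
  ext x
  simp [mirror]

theorem rightMove_swapRows {ρ ρ' : RPair α} (h : RightMove ρ ρ') :
    RightMove (swapRows ρ) (swapRows ρ') := by
  obtain ⟨ε, zc, zo, h⟩ := h
  exact ⟨!ε, zc, zo, by simpa only [swapRows, Bool.not_not] using h⟩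

theorem leftMove_mirror {ρ ρ' : RPair α} (h : RightMove ρ ρ') :
    LeftMove (mirror ρ) (mirror ρ') := by
  obtain ⟨ε, zc, zo, hzc, hzo, hrow, hfix, hzo', hshift⟩ := h
  refine ⟨ε, zc, zo, fun x => Fin.rev_le_rev.2 (hzc x), fun x => Fin.rev_le_rev.2 (hzo x),
    by simp only [mirror, hrow], fun b hb => congrArg Fin.rev (hfix b (Fin.rev_le_rev.1 hb)), ?_,
    fun b hb hne => ?_⟩
  · simp only [mirror, trans_apply, Fin.revPerm_apply, Fin.val_rev, hzo']
    omega
  · simp only [mirror, trans_apply, Fin.revPerm_apply, Fin.val_rev,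
      hshift b (fun hle => hb (Fin.rev_le_rev.2 hle)) hne]
    omega

namespace Encodes

variable {ρ ρ' : RPair α} {s t : WordPair α}

theorem swap (h : Encodes ρ s) : Encodes (swapRows ρ) s.swap := And.symm h

theorem reverse (h : Encodes ρ s) : Encodes (mirror ρ) s.reverse := ⟨h.1.reverse, h.2.reverse⟩

theorem unique (h : Encodes ρ s) (h' : Encodes ρ' s) : ρ = ρ' := by
  funext ε
  cases ε
  · exact h.1.unique h'.1
  · exact h.2.unique h'.2

theorem rename (h : Encodes ρ s) (σ : Perm α) : Encodes (pairRename ρ σ⁻¹) (s.rename σ) := by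
  simpa [Encodes, Lists, pairRename, WordPair.rename, Function.comp_def] using h

theorem exists_rightMove (h : Encodes ρ s) (hst : RightStep s t) :
    ∃ ρ', Encodes ρ' t ∧ RightMove ρ ρ' := by
  induction hst generalizing ρ with
  | bottom T P S w l =>
    obtain ⟨ψ, hψ⟩ := h.2.exists_of_perm (RightStep.bottom T P S w l).perm.2
    have hlast : Lists (ρ true) ((P ++ w :: S) ++ [l]) := by simpa using h.2
    exact ⟨fun ε => cond ε ψ (ρ false), ⟨h.1, hψ⟩, false, w, l, h.1.le_last, hlast.le_last, rfl,
      h.2.rightMove hψ⟩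
  | swap _ ih =>
    obtain ⟨ρ', henc, hmove⟩ := ih h.swap
    exact ⟨swapRows ρ', henc.swap, by simpa using rightMove_swapRows hmove⟩

theorem exists_move (h : Encodes ρ s) (hst : Step s t) :
    ∃ ρ', Encodes ρ' t ∧ (RightMove ρ ρ' ∨ LeftMove ρ ρ') := by
  cases hst with
  | right hst => exact (h.exists_rightMove hst).imp fun _ h' => ⟨h'.1, .inl h'.2⟩
  | left hst =>
    obtain ⟨ρ', henc, hmove⟩ := Encodes.exists_rightMove (by simpa using h.reverse) hst
    exact ⟨mirror ρ', henc.reverse, .inr (by simpa using leftMove_mirror hmove)⟩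

theorem exists_mem_eClass (h : Encodes ρ s) (hst : Reach s t) :
    ∃ ρ' ∈ EClass ρ, Encodes ρ' t := by
  induction hst with
  | refl => exact ⟨ρ, .refl, h⟩
  | tail _ hstep ih =>
    obtain ⟨ρ₁, hmem, henc⟩ := ih
    obtain ⟨ρ₂, henc', hmove⟩ := henc.exists_move hstep
    exact ⟨ρ₂, .tail hmem hmove, henc'⟩

theorem renamingGroup_subset_renamings (h : Encodes ρ s) :
    (s.renamingGroup : Set (Perm α)) ⊆ renamings ρ := by
  intro σ hσ
  obtain ⟨ρ', hmem, henc⟩ := h.exists_mem_eClass (mem_renamingGroup.1 (inv_mem hσ))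
  have hrename : Encodes (pairRename ρ σ) (s.rename σ⁻¹) := by simpa using h.rename σ⁻¹
  rwa [← hrename.unique henc] at hmem

end Encodes

end

/-! ### The pair of the theorem -/

/-- The word `b₀ c₀ b₁ c₁ …`. -/
def interleave {k : ℕ} (b c : Fin k → α) : List α := (List.ofFn fun i => [b i, c i]).flatten

theorem interleave_succ {k : ℕ} (b c : Fin (k + 1) → α) :
    interleave b c = b 0 :: c 0 :: interleave (fun i => b i.succ) (fun i => c i.succ) := by
  simp [interleave, List.ofFn_succ]

theorem length_interleave {k : ℕ} (b c : Fin k → α) : (interleave b c).length = 2 * k := by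
  induction k with
  | zero => rfl
  | succ k ih => rw [interleave_succ, List.length_cons, List.length_cons, ih]; ring

theorem swapAdjacent_interleave {k : ℕ} (b c : Fin k → α) :
    swapAdjacent (interleave b c) = interleave c b := by
  induction k with
  | zero => rfl
  | succ k ih => rw [interleave_succ, interleave_succ, swapAdjacent, ih]

theorem map_interleave_eq_range' {φ : α → ℕ} {k : ℕ} {b c : Fin k → α} {r : ℕ}
    (hb : ∀ i, φ (b i) = r + 2 * (i : ℕ)) (hc : ∀ i, φ (c i) = r + 1 + 2 * (i : ℕ)) :
    (interleave b c).map φ = List.range' r (2 * k) := by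
  induction k generalizing r with
  | zero => rfl
  | succ k ih =>
    have tail := ih (r := r + 2) (b := fun i => b i.succ) (c := fun i => c i.succ)
      (fun i => by rw [hb, Fin.val_succ]; ring) (fun i => by rw [hc, Fin.val_succ]; ring)
    rw [interleave_succ, List.map_cons, List.map_cons, tail, hb, hc, Nat.mul_succ,
      List.range'_succ, List.range'_succ]
    simp

variable [Fintype α]

theorem lists_interleave {φ : α ≃ Fin (Fintype.card α)} {m n : ℕ} {a d e f z : α}
    {b c : Fin m → α} {g h : Fin n → α} (hcard : Fintype.card α = 2 * m + 2 * n + 5)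
    (ha : (φ a : ℕ) = 0)
    (hb : ∀ i, (φ (b i) : ℕ) = 2 * (i : ℕ) + 1) (hc : ∀ i, (φ (c i) : ℕ) = 2 * (i : ℕ) + 2)
    (hd : (φ d : ℕ) = 2 * m + 1) (he : (φ e : ℕ) = 2 * m + 2) (hf : (φ f : ℕ) = 2 * m + 3)
    (hg : ∀ j, (φ (g j) : ℕ) = 2 * m + 4 + 2 * (j : ℕ))
    (hh : ∀ j, (φ (h j) : ℕ) = 2 * m + 5 + 2 * (j : ℕ)) (hz : (φ z : ℕ) = 2 * m + 2 * n + 4) :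
    Lists φ (a :: ((interleave b c ++ d :: e :: f :: interleave g h) ++ [z])) := by
  have left_block : (interleave b c).map (fun x => (φ x : ℕ)) = List.range' 1 (2 * m) :=
    map_interleave_eq_range' (fun i => by rw [hb]; ring) (fun i => by rw [hc]; ring)
  have right_block : (interleave g h).map (fun x => (φ x : ℕ)) = List.range' (2 * m + 4) (2 * n) :=
    map_interleave_eq_range' hg hh
  have split_range : List.range (Fintype.card α) = 0 :: (List.range' 1 (2 * m) ++
      (2 * m + 1) :: (2 * m + 2) :: (2 * m + 3) ::
        (List.range' (2 * m + 4) (2 * n) ++ [2 * m + 2 * n + 4])) := by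
    rw [hcard, List.range_eq_range', show 2 * m + 2 * n + 5 = (2 * m + (2 * n + 1 + 3)) + 1 by ring,
      List.range'_succ, ← List.range'_append_1, List.range'_succ, List.range'_succ,
      List.range'_succ, List.range'_concat]
    grind
  simp only [Lists, List.map_cons, List.map_append, List.map_nil, left_block, right_block, ha, hd,
    he, hf, hz, split_range, List.append_assoc, List.cons_append]

theorem pairIrreducible_of_first_last {ρ : RPair α} {x : α} (hfirst : (ρ false x : ℕ) = 0)
    (hlast : (ρ true x : ℕ) + 1 = Fintype.card α) : PairIrreducible ρ := by
  intro k hk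
  have hx : ρ true x ≤ k := hk x (Fin.le_def.2 (by omega))
  rw [Fin.le_def] at hx
  omega

end WordPair

/-- for `A = {a, b₁,…,b_m, c₁,…,c_m, d, e, f, g₁,…,g_n, h₁,…,h_n, z}`
(2m+2n+5 distinct letters) with
`π₀ : a b₁ c₁ … b_m c_m d e f g₁ h₁ … g_n h_n z` and
`π₁ : z c₁ b₁ … c_m b_m f e d h₁ g₁ … h_n g_n a`
(positions written 0-indexed; `b i` denotes `b_{i+1}` etc.),
`π` is irreducible and `Alt(A) ⊆ G(π)`; if `m = n` then `G(π) = Sym(A)`. -/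
theorem stmt12 {A : Type*} [Fintype A] [DecidableEq A] [Nonempty A]
    (m n : ℕ) (a d e f z : A) (b c : Fin m → A) (g h : Fin n → A)
    (hcard : Fintype.card A = 2 * m + 2 * n + 5)
    (π : RPair A)
    (h0a : (π false a : ℕ) = 0)
    (h0b : ∀ i : Fin m, (π false (b i) : ℕ) = 2 * (i : ℕ) + 1)
    (h0c : ∀ i : Fin m, (π false (c i) : ℕ) = 2 * (i : ℕ) + 2)
    (h0d : (π false d : ℕ) = 2 * m + 1)
    (h0e : (π false e : ℕ) = 2 * m + 2)
    (h0f : (π false f : ℕ) = 2 * m + 3)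
    (h0g : ∀ j : Fin n, (π false (g j) : ℕ) = 2 * m + 4 + 2 * (j : ℕ))
    (h0h : ∀ j : Fin n, (π false (h j) : ℕ) = 2 * m + 5 + 2 * (j : ℕ))
    (h0z : (π false z : ℕ) = 2 * m + 2 * n + 4)
    (h1z : (π true z : ℕ) = 0)
    (h1c : ∀ i : Fin m, (π true (c i) : ℕ) = 2 * (i : ℕ) + 1)
    (h1b : ∀ i : Fin m, (π true (b i) : ℕ) = 2 * (i : ℕ) + 2)
    (h1f : (π true f : ℕ) = 2 * m + 1)
    (h1e : (π true e : ℕ) = 2 * m + 2)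
    (h1d : (π true d : ℕ) = 2 * m + 3)
    (h1h : ∀ j : Fin n, (π true (h j) : ℕ) = 2 * m + 4 + 2 * (j : ℕ))
    (h1g : ∀ j : Fin n, (π true (g j) : ℕ) = 2 * m + 5 + 2 * (j : ℕ))
    (h1a : (π true a : ℕ) = 2 * m + 2 * n + 4) :
    PairIrreducible π ∧
      (alternatingGroup A : Set (Equiv.Perm A)) ⊆ renamings π ∧
      (m = n → renamings π = Set.univ) := by
  have henc : WordPair.Encodes π
      (.mainPair a d e f z (WordPair.interleave b c) (WordPair.interleave g h)) :=
    ⟨WordPair.lists_interleave hcard h0a h0b h0c h0d h0e h0f h0g h0h h0z, by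
      simpa only [WordPair.mainPair, WordPair.std, WordPair.swapAdjacent_interleave] using
        WordPair.lists_interleave hcard h1z h1c h1b h1f h1e h1d h1h h1g h1a⟩
  have hsimple : WordPair.Simple _ := ⟨henc.1.nodup, henc.2.nodup⟩
  refine ⟨WordPair.pairIrreducible_of_first_last h0a (by omega), ?_, ?_⟩
  · have halt := WordPair.alternatingGroup_le_renamingGroup_std hsimple henc.1.mem henc.2.mem
    exact (SetLike.coe_subset_coe.2 halt).trans henc.renamingGroup_subset_renamings
  · rintro rfl
    have htop := WordPair.renamingGroup_mainPair_eq_top (WordPair.length_interleave b c)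
      (WordPair.length_interleave g h) hsimple henc.1.mem henc.2.mem
    refine Set.eq_univ_of_univ_subset ?_
    rw [← Subgroup.coe_top, ← htop]
    exact henc.renamingGroup_subset_renamings
end
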